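/- Z-norm bound for T_{1,f} (Lemma 3.3(i), estimate (pi20)): For every h ∈ L∞(I_δ), one has ‖T_{1,f}h‖_Z ≲ ε·log(1/ε)·‖h‖_{L∞(I_{2√ε})}. -/

import Mathlib

noncomputable section
open Set MeasureTheory Filter Real

/-- The principal value at `α` of the integral `∫_ℝ F(β) dβ`, understood as the limit of the
integrals over `{β : r < |α − β|}` as `r → 0⁺`. -/
def pvI (F : ℝ → ℝ) (α : ℝ) : ℝ :=
  limUnder (nhdsWithin (0:ℝ) (Ioi 0)) (fun r => ∫ β in {β : ℝ | r < |α - β|}, F β)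

/-- `ψ` is a smooth even cutoff, with values in `[0,1]`, supported in `[−1,1]`,
equal to `1` on `[−1/2,1/2]`. -/
def IsCutoff (ψ : ℝ → ℝ) : Prop :=
  ContDiff ℝ (⊤ : ℕ∞) ψ ∧ (∀ x : ℝ, ψ (-x) = ψ x) ∧ (∀ x : ℝ, ψ x ∈ Icc (0:ℝ) 1) ∧
    (∀ x : ℝ, 1 < |x| → ψ x = 0) ∧ (∀ x : ℝ, |x| ≤ 1/2 → ψ x = 1)

/-- The rescaled cutoff `ψ_r(x) = ψ(x/r)`. -/
def scut (ψ : ℝ → ℝ) (r x : ℝ) : ℝ := ψ (x / r)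

/-- `X̃(α) = 2ε + f(α) + g(α)`. -/
def Xt (ε : ℝ) (f g : ℝ → ℝ) (α : ℝ) : ℝ := 2 * ε + f α + g α

/-- The operator `T_{1,f}`. -/
def T1 (ψ : ℝ → ℝ) (ε : ℝ) (f : ℝ → ℝ) (h : ℝ → ℝ) (α : ℝ) : ℝ :=
  (2 * π)⁻¹ * pvI (fun β =>
    (f α - f β) / ((α - β) ^ 2 + (f α - f β) ^ 2) * h β * scut ψ (Real.sqrt ε) (α - β)) α

/-- The operator `T_{2,f}`. -/
def T2 (ψ : ℝ → ℝ) (ε : ℝ) (f : ℝ → ℝ) (h : ℝ → ℝ) (α : ℝ) : ℝ :=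
  (2 * π)⁻¹ * pvI (fun β =>
    (α - β) / ((α - β) ^ 2 + (f α - f β) ^ 2) * h β * scut ψ (Real.sqrt ε) (α - β)) α

/-- The operator `T_{3,(f,g)}`. -/
def T3 (ψ : ℝ → ℝ) (ε : ℝ) (f g : ℝ → ℝ) (h : ℝ → ℝ) (α : ℝ) : ℝ :=
  (2 * π)⁻¹ * ∫ β : ℝ,
    (2 * ε + f α + g β) / ((α - β) ^ 2 + (2 * ε + f α + g β) ^ 2) * h β *
      scut ψ (Real.sqrt ε) (α - β)

/-- The operator `T_{4,(f,g)}`. -/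
def T4 (ψ : ℝ → ℝ) (ε : ℝ) (f g : ℝ → ℝ) (h : ℝ → ℝ) (α : ℝ) : ℝ :=
  (2 * π)⁻¹ * ∫ β : ℝ,
    (α - β) / ((α - β) ^ 2 + (2 * ε + f α + g β) ^ 2) * h β * scut ψ (Real.sqrt ε) (α - β)

/-- The kernel of the operator `H`. -/
def Hker (ψ : ℝ → ℝ) (ε : ℝ) (f g : ℝ → ℝ) (α β : ℝ) : ℝ :=
  (α - β)⁻¹ * ((Xt ε f g α) ^ 2 / ((α - β) ^ 2 + (Xt ε f g α) ^ 2)) *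
    scut ψ (Real.sqrt ε / 2 ^ 6) α * scut ψ (Real.sqrt ε / 2 ^ 6) (α - β)

/-- The kernel of the operator `M`. -/
def Mker (ψ : ℝ → ℝ) (ε : ℝ) (f g : ℝ → ℝ) (α β : ℝ) : ℝ :=
  (Xt ε f g α) / ((α - β) ^ 2 + (Xt ε f g α) ^ 2) *
    scut ψ (Real.sqrt ε / 2 ^ 6) α * scut ψ (Real.sqrt ε / 2 ^ 6) (α - β)

/-- The operator `H` (a principal value integral in the second variable of the kernel). -/
def Hop (ψ : ℝ → ℝ) (ε : ℝ) (f g : ℝ → ℝ) (h : ℝ → ℝ) (α : ℝ) : ℝ :=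
  (2 * π)⁻¹ * pvI (fun β => Hker ψ ε f g α β * h β) α

/-- The adjoint operator `H*` (integration of the kernel of `H` in its first variable). -/
def Hstar (ψ : ℝ → ℝ) (ε : ℝ) (f g : ℝ → ℝ) (φ : ℝ → ℝ) (β : ℝ) : ℝ :=
  (2 * π)⁻¹ * pvI (fun α => Hker ψ ε f g α β * φ α) β

/-- The operator `M`. -/
def Mop (ψ : ℝ → ℝ) (ε : ℝ) (f g : ℝ → ℝ) (h : ℝ → ℝ) (α : ℝ) : ℝ :=
  (2 * π)⁻¹ * ∫ β : ℝ, Mker ψ ε f g α β * h β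

/-- The adjoint operator `M*` (integration of the kernel of `M` in its first variable). -/
def Mstar (ψ : ℝ → ℝ) (ε : ℝ) (f g : ℝ → ℝ) (φ : ℝ → ℝ) (β : ℝ) : ℝ :=
  (2 * π)⁻¹ * ∫ α : ℝ, Mker ψ ε f g α β * φ α

/-- The class `C₂` of test functions: `C¹` functions compactly supported in `I_δ = (−δ,δ)` with
`|φ⁽ᵏ⁾(α)| ≤ ε/(ε^{2+k} + |α|^{2+k})` on `I_δ` for `k ∈ {0,1}`. -/
def InC2 (δ ε : ℝ) (φ : ℝ → ℝ) : Prop :=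
  ContDiff ℝ 1 φ ∧ HasCompactSupport φ ∧ tsupport φ ⊆ Ioo (-δ) δ ∧
    ∀ α ∈ Ioo (-δ) δ,
      |φ α| ≤ ε / (ε ^ 2 + |α| ^ 2) ∧ |deriv φ α| ≤ ε / (ε ^ 3 + |α| ^ 3)

/-- The standing hypotheses on `f, g : (−δ,δ) → ℝ`: they are `C⁵`, with
`‖f‖_{C³} + ‖g‖_{C³} ≤ A`, `f(0) = f'(0) = g(0) = g'(0) = 0`, and
`f(α) + g(β) ≥ −ε` for `α, β ∈ (−4√ε, 4√ε)`. -/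
def GoodFG (δ A ε : ℝ) (f g : ℝ → ℝ) : Prop :=
  ContDiffOn ℝ 5 f (Ioo (-δ) δ) ∧ ContDiffOn ℝ 5 g (Ioo (-δ) δ) ∧
    f 0 = 0 ∧ g 0 = 0 ∧
    derivWithin f (Ioo (-δ) δ) 0 = 0 ∧ derivWithin g (Ioo (-δ) δ) 0 = 0 ∧
    (∀ x ∈ Ioo (-δ) δ, ∀ i : ℕ, i ≤ 3 →
      |iteratedDerivWithin i f (Ioo (-δ) δ) x| + |iteratedDerivWithin i g (Ioo (-δ) δ) x| ≤ A) ∧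
    (∀ α ∈ Ioo (-(4 * Real.sqrt ε)) (4 * Real.sqrt ε),
      ∀ β ∈ Ioo (-(4 * Real.sqrt ε)) (4 * Real.sqrt ε), -ε ≤ f α + g β)

/-!
`H*φ` is a molecule at scale `ε`: it has mean zero, because the kernel of `H` is odd in `α - β` for
fixed `α`, and it is `O(ε² / (|x| + ε)³)`, because this odd kernel is the difference of the Hilbert
kernel and of a conjugate Poisson kernel of width comparable to `ε`. Hence only the oscillation of
`T_{1,f}h` around a constant matters, and by dyadic summation it is enough to know that its `L¹`
deviation over `(-R, R)` is `O(R² log(1/ε))` for `ε ≤ R ≤ √ε / 8`.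

There the constant is the value of `T_{1,f}h` at `0`. The part of `h` far from `(-R, R)`
contributes through the regularity of the kernel, which costs the logarithm. Near `(-R, R)` the
kernel is `f'(α) / (α - β) + O(1)` with `|f'(α)| ≤ A R`, so the `L²` bound of the Hilbert transform
gives another factor `R`.
-/

open scoped Topology Convolution

section PoissonKernels

/-- The Poisson kernel of the upper half-plane at height `y`, without the factor `1 / π`. -/
def poissonKer (y x : ℝ) : ℝ := y / (x ^ 2 + y ^ 2)

/-- The conjugate Poisson kernel of the upper half-plane at height `y`, without the factor
`1 / π`. It is the smooth truncation of `1 / x` at scale `y`. -/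
def conjPoissonKer (y x : ℝ) : ℝ := x / (x ^ 2 + y ^ 2)

/-- The kernel which governs the difference of the squares of the conjugate Poisson and Poisson
integrals: the real part of `1 / ((a + i y) (b + i y))`. -/
def pairKer (y a b : ℝ) : ℝ :=
  conjPoissonKer y a * conjPoissonKer y b - poissonKer y a * poissonKer y b

variable {y : ℝ}

lemma sq_add_sq_pos (hy : 0 < y) (x : ℝ) : 0 < x ^ 2 + y ^ 2 := by positivity

lemma continuous_poissonKer (hy : 0 < y) : Continuous (poissonKer y) :=
  continuous_const.div (by fun_prop) fun x => (sq_add_sq_pos hy x).ne'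

lemma continuous_conjPoissonKer (hy : 0 < y) : Continuous (conjPoissonKer y) :=
  continuous_id.div (by fun_prop) fun x => (sq_add_sq_pos hy x).ne'

lemma poissonKer_nonneg (hy : 0 < y) (x : ℝ) : 0 ≤ poissonKer y x := by
  unfold poissonKer; positivity

lemma poissonKer_neg (y x : ℝ) : poissonKer y (-x) = poissonKer y x := by
  simp only [poissonKer, neg_sq]

lemma poissonKer_eq_comp_mul (hy : 0 < y) (x : ℝ) :
    poissonKer y x = y⁻¹ * (1 + (y⁻¹ * x) ^ 2)⁻¹ := by
  have := sq_add_sq_pos hy x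
  unfold poissonKer
  field_simp
  ring

lemma integrable_poissonKer (hy : 0 < y) : Integrable (poissonKer y) := by
  simp_rw [funext (poissonKer_eq_comp_mul hy)]
  exact (integrable_inv_one_add_sq.comp_mul_left' (inv_ne_zero hy.ne')).const_mul y⁻¹

lemma integral_poissonKer (hy : 0 < y) : ∫ x, poissonKer y x = π := by
  simp_rw [poissonKer_eq_comp_mul hy]
  rw [integral_const_mul, Measure.integral_comp_mul_left (fun u : ℝ => (1 + u ^ 2)⁻¹) y⁻¹,
    integral_univ_inv_one_add_sq, inv_inv, abs_of_pos hy, smul_eq_mul,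
    inv_mul_cancel_left₀ hy.ne']

lemma sq_poissonKer_add_sq_conjPoissonKer (hy : 0 < y) (x : ℝ) :
    poissonKer y x ^ 2 + conjPoissonKer y x ^ 2 = poissonKer y x / y := by
  have := sq_add_sq_pos hy x
  unfold poissonKer conjPoissonKer
  field_simp
  ring

lemma poissonKer_le_inv (hy : 0 < y) (x : ℝ) : poissonKer y x ≤ y⁻¹ := by
  unfold poissonKer
  rw [inv_eq_one_div, div_le_div_iff₀ (sq_add_sq_pos hy x) hy]
  nlinarith [sq_nonneg x]

lemma abs_conjPoissonKer_le_inv (hy : 0 < y) (x : ℝ) : |conjPoissonKer y x| ≤ y⁻¹ := by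
  refine abs_le_of_sq_le_sq ?_ (inv_nonneg.2 hy.le)
  calc conjPoissonKer y x ^ 2 ≤ poissonKer y x / y := by
        nlinarith [sq_poissonKer_add_sq_conjPoissonKer hy x, sq_nonneg (poissonKer y x)]
    _ ≤ y⁻¹ / y := by gcongr; exact poissonKer_le_inv hy x
    _ = y⁻¹ ^ 2 := by ring

lemma abs_pairKer_le (hy : 0 < y) (a b : ℝ) :
    |pairKer y a b| ≤ (poissonKer y a + poissonKer y b) / y := by
  have ha := sq_poissonKer_add_sq_conjPoissonKer hy a
  have hb := sq_poissonKer_add_sq_conjPoissonKer hy b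
  rw [add_div, ← ha, ← hb, pairKer, abs_le]
  constructor <;> nlinarith [sq_nonneg (conjPoissonKer y a - conjPoissonKer y b),
    sq_nonneg (conjPoissonKer y a + conjPoissonKer y b),
    sq_nonneg (poissonKer y a - poissonKer y b), sq_nonneg (poissonKer y a + poissonKer y b)]

lemma integrable_poissonKer_sub_add_div (hy : 0 < y) (t s : ℝ) :
    Integrable fun x => (poissonKer y (x - t) + poissonKer y (x - s)) / y :=
  (((integrable_poissonKer hy).comp_sub_right t).add
    ((integrable_poissonKer hy).comp_sub_right s)).div_const y

lemma integrable_pairKer_sub (hy : 0 < y) (t s : ℝ) :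
    Integrable fun x => pairKer y (x - t) (x - s) := by
  have hQ := continuous_conjPoissonKer hy
  have hP := continuous_poissonKer hy
  have hcont : Continuous fun x => pairKer y (x - t) (x - s) := by unfold pairKer; fun_prop
  exact (integrable_poissonKer_sub_add_div hy t s).mono' hcont.aestronglyMeasurable
    (.of_forall fun x => abs_pairKer_le hy _ _)

lemma integral_abs_pairKer_sub_le (hy : 0 < y) (t s : ℝ) :
    ∫ x, |pairKer y (x - t) (x - s)| ≤ 2 * π / y := by
  refine (integral_mono (integrable_pairKer_sub hy t s).abs
    (integrable_poissonKer_sub_add_div hy t s) fun x => abs_pairKer_le hy _ _).trans_eq ?_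
  rw [integral_div, integral_add ((integrable_poissonKer hy).comp_sub_right t)
    ((integrable_poissonKer hy).comp_sub_right s), integral_sub_right_eq_self (poissonKer y),
    integral_sub_right_eq_self (poissonKer y), integral_poissonKer hy, two_mul]

lemma tendsto_div_sq_add_sq_cocompact (hy : 0 < y) (a b : ℝ) :
    Tendsto (fun x => (a * x + b) / (x ^ 2 + y ^ 2)) (cocompact ℝ) (𝓝 0) := by
  have hbound : Tendsto (fun x : ℝ => |a| * |x|⁻¹ + |b| * (|x|⁻¹) ^ 2) (cocompact ℝ) (𝓝 0) := by
    have hinv : Tendsto (fun x : ℝ => |x|⁻¹) (cocompact ℝ) (𝓝 0) :=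
      tendsto_inv_atTop_zero.comp tendsto_norm_cocompact_atTop
    simpa using (hinv.const_mul |a|).add ((hinv.pow 2).const_mul |b|)
  refine squeeze_zero_norm' ?_ hbound
  filter_upwards [tendsto_norm_cocompact_atTop.eventually_gt_atTop (0 : ℝ)] with x hx
  have hx' : 0 < |x| := hx
  rw [norm_eq_abs, abs_div, abs_of_pos (sq_add_sq_pos hy x)]
  calc |a * x + b| / (x ^ 2 + y ^ 2) ≤ (|a| * |x| + |b|) / |x| ^ 2 := by
        gcongr
        · rw [← abs_mul]; exact abs_add_le _ _
        · rw [sq_abs]; linarith [sq_nonneg y]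
    _ = |a| * |x|⁻¹ + |b| * (|x|⁻¹) ^ 2 := by field_simp

lemma tendsto_sub_const_cocompact (c : ℝ) :
    Tendsto (fun x : ℝ => x - c) (cocompact ℝ) (cocompact ℝ) :=
  (Homeomorph.subRight c).isClosedEmbedding.tendsto_cocompact

lemma tendsto_log_sub_log_cocompact (hy : 0 < y) (t s : ℝ) :
    Tendsto (fun x => log ((x - t) ^ 2 + y ^ 2) - log ((x - s) ^ 2 + y ^ 2))
      (cocompact ℝ) (𝓝 0) := by
  have hratio : Tendsto (fun x => 1 + (2 * (s - t) * (x - s) + (s - t) ^ 2) /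
      ((x - s) ^ 2 + y ^ 2)) (cocompact ℝ) (𝓝 (1 + 0)) :=
    ((tendsto_div_sq_add_sq_cocompact hy (2 * (s - t)) ((s - t) ^ 2)).comp
      (tendsto_sub_const_cocompact s)).const_add 1
  have hlog := hratio.log (by norm_num)
  rw [add_zero, log_one] at hlog
  refine hlog.congr fun x => ?_
  have ht := sq_add_sq_pos hy (x - t)
  have hs := sq_add_sq_pos hy (x - s)
  rw [← log_div ht.ne' hs.ne']
  congr 1
  field_simp
  ring

lemma hasDerivAt_sq_sub_add_sq (y c x : ℝ) :
    HasDerivAt (fun x => (x - c) ^ 2 + y ^ 2) (2 * (x - c)) x := by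
  simpa using (((hasDerivAt_id x).sub_const c).pow 2).add_const (y ^ 2)

lemma hasDerivAt_neg_conjPoissonKer_sub (hy : 0 < y) (t x : ℝ) :
    HasDerivAt (fun x => -conjPoissonKer y (x - t)) (pairKer y (x - t) (x - t)) x := by
  have ht := sq_add_sq_pos hy (x - t)
  refine (((hasDerivAt_id x).sub_const t).div (hasDerivAt_sq_sub_add_sq y t x)
    ht.ne').neg.congr_deriv ?_
  simp only [pairKer, conjPoissonKer, poissonKer, id]
  field_simp
  ring

lemma hasDerivAt_log_sub_log (hy : 0 < y) {t s : ℝ} (hts : t ≠ s) (x : ℝ) :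
    HasDerivAt (fun x => (log ((x - t) ^ 2 + y ^ 2) - log ((x - s) ^ 2 + y ^ 2)) / (2 * (t - s)))
      (pairKer y (x - t) (x - s)) x := by
  have ht := sq_add_sq_pos hy (x - t)
  have hs := sq_add_sq_pos hy (x - s)
  have hne : t - s ≠ 0 := sub_ne_zero.2 hts
  refine ((((hasDerivAt_sq_sub_add_sq y t x).log ht.ne').sub
    ((hasDerivAt_sq_sub_add_sq y s x).log hs.ne')).div_const (2 * (t - s))).congr_deriv ?_
  simp only [pairKer, conjPoissonKer, poissonKer]
  field_simp
  ring

lemma integral_pairKer_sub (hy : 0 < y) (t s : ℝ) : ∫ x, pairKer y (x - t) (x - s) = 0 := by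
  obtain ⟨F, hF, hlim⟩ : ∃ F : ℝ → ℝ, (∀ x, HasDerivAt F (pairKer y (x - t) (x - s)) x) ∧
      Tendsto F (cocompact ℝ) (𝓝 0) := by
    rcases eq_or_ne t s with rfl | hts
    · refine ⟨_, hasDerivAt_neg_conjPoissonKer_sub hy t, ?_⟩
      simpa [conjPoissonKer, Function.comp_def] using
        ((tendsto_div_sq_add_sq_cocompact hy 1 0).comp (tendsto_sub_const_cocompact t)).neg
    · refine ⟨_, hasDerivAt_log_sub_log hy hts, ?_⟩
      simpa using (tendsto_log_sub_log_cocompact hy t s).div_const (2 * (t - s))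
  simpa using integral_of_hasDerivAt_of_tendsto hF (integrable_pairKer_sub hy t s)
    (hlim.mono_left atBot_le_cocompact) (hlim.mono_left atTop_le_cocompact)

end PoissonKernels

section PoissonIntegrals

variable {y M : ℝ} {h : ℝ → ℝ}

lemma integrable_mul_comp_sub_left {k : ℝ → ℝ} {C : ℝ} (hh : Integrable h) (hk : Continuous k)
    (hC : ∀ x, |k x| ≤ C) (x : ℝ) : Integrable fun t => h t * k (x - t) :=
  hh.mul_bdd (c := C) (by fun_prop) (.of_forall fun _ => hC _)

lemma integrable_mul_conjPoissonKer (hh : Integrable h) (hy : 0 < y) (x : ℝ) :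
    Integrable fun t => h t * conjPoissonKer y (x - t) :=
  integrable_mul_comp_sub_left hh (continuous_conjPoissonKer hy) (abs_conjPoissonKer_le_inv hy) x

lemma integrable_mul_poissonKer (hh : Integrable h) (hy : 0 < y) (x : ℝ) :
    Integrable fun t => h t * poissonKer y (x - t) :=
  integrable_mul_comp_sub_left hh (continuous_poissonKer hy)
    (fun t => (abs_of_nonneg (poissonKer_nonneg hy t)).trans_le (poissonKer_le_inv hy t)) x

lemma abs_convolution_poissonKer_le (hM : ∀ x, |h x| ≤ M) (hy : 0 < y) (x : ℝ) :
    |(h ⋆ poissonKer y) x| ≤ π * M := by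
  have hdom : Integrable fun t => M * poissonKer y (x - t) :=
    ((integrable_poissonKer hy).comp_sub_left x).const_mul M
  simp only [convolution_lsmul, smul_eq_mul, ← norm_eq_abs]
  refine (norm_integral_le_of_norm_le hdom (.of_forall fun t => ?_)).trans_eq ?_
  · rw [norm_mul, norm_of_nonneg (poissonKer_nonneg hy _)]
    exact mul_le_mul_of_nonneg_right (hM t) (poissonKer_nonneg hy _)
  · rw [integral_const_mul, integral_sub_left_eq_self (poissonKer y), integral_poissonKer hy,
      mul_comm]

lemma abs_convolution_poissonKer_le_convolution_abs (hy : 0 < y) (x : ℝ) :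
    |(h ⋆ poissonKer y) x| ≤ ((fun t => |h t|) ⋆ poissonKer y) x := by
  refine (abs_integral_le_integral_abs (f := fun t => h t * poissonKer y (x - t))).trans_eq ?_
  simp only [abs_mul, abs_of_nonneg (poissonKer_nonneg hy _)]
  rfl

lemma integral_sq_convolution_poissonKer_le (hh : Integrable h) (hM : ∀ x, |h x| ≤ M)
    (hy : 0 < y) :
    Integrable (fun x => (h ⋆ poissonKer y) x ^ 2) ∧
      ∫ x, (h ⋆ poissonKer y) x ^ 2 ≤ π ^ 2 * M * ∫ x, |h x| := by
  have hMnn : 0 ≤ M := (abs_nonneg _).trans (hM 0)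
  have hdom : Integrable fun x => π * M * ((fun t => |h t|) ⋆ poissonKer y) x :=
    (hh.abs.integrable_convolution _ (integrable_poissonKer hy)).const_mul _
  have hle : ∀ x, (h ⋆ poissonKer y) x ^ 2 ≤
      π * M * ((fun t => |h t|) ⋆ poissonKer y) x := fun x => by
    rw [← sq_abs, sq]
    exact mul_le_mul (abs_convolution_poissonKer_le hM hy x)
      (abs_convolution_poissonKer_le_convolution_abs hy x) (abs_nonneg _) (by positivity)
  have hint : Integrable fun x => (h ⋆ poissonKer y) x ^ 2 :=
    hdom.mono' ((hh.integrable_convolution _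
      (integrable_poissonKer hy)).aestronglyMeasurable.pow 2) (.of_forall fun x => by
        rw [norm_of_nonneg (sq_nonneg _)]; exact hle x)
  refine ⟨hint, (integral_mono hint hdom hle).trans_eq ?_⟩
  rw [integral_const_mul, integral_convolution _ hh.abs (integrable_poissonKer hy),
    integral_poissonKer hy]
  simp only [ContinuousLinearMap.lsmul_apply, smul_eq_mul]
  ring

lemma integrable_mul_mul_pairKer (hh : Integrable h) (hy : 0 < y) :
    Integrable (fun p : ℝ × (ℝ × ℝ) =>
      h p.2.1 * h p.2.2 * pairKer y (p.1 - p.2.1) (p.1 - p.2.2)) := by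
  have hQ := continuous_conjPoissonKer hy
  have hP := continuous_poissonKer hy
  have hcont : Continuous fun p : ℝ × (ℝ × ℝ) => pairKer y (p.1 - p.2.1) (p.1 - p.2.2) := by
    unfold pairKer; fun_prop
  have hmeas : AEStronglyMeasurable (fun p : ℝ × (ℝ × ℝ) =>
      h p.2.1 * h p.2.2 * pairKer y (p.1 - p.2.1) (p.1 - p.2.2)) :=
    ((hh.mul_prod hh).aestronglyMeasurable.comp_snd).mul hcont.aestronglyMeasurable
  refine (integrable_prod_iff' hmeas).2
    ⟨.of_forall fun t => (integrable_pairKer_sub hy t.1 t.2).const_mul (h t.1 * h t.2), ?_⟩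
  have hdom : Integrable fun t : ℝ × ℝ => |h t.1| * |h t.2| * (2 * π / y) :=
    (hh.abs.mul_prod hh.abs).mul_const _
  refine hdom.mono' hmeas.norm.prod_swap.integral_prod_right' (.of_forall fun t => ?_)
  simp_rw [norm_of_nonneg (integral_nonneg fun _ => norm_nonneg _), norm_mul, norm_eq_abs,
    integral_const_mul]
  exact mul_le_mul_of_nonneg_left (integral_abs_pairKer_sub_le hy t.1 t.2) (by positivity)

lemma integral_mul_mul_pairKer (hh : Integrable h) (hy : 0 < y) (x : ℝ) :
    ∫ t : ℝ × ℝ, h t.1 * h t.2 * pairKer y (x - t.1) (x - t.2) =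
      (h ⋆ conjPoissonKer y) x ^ 2 - (h ⋆ poissonKer y) x ^ 2 := by
  have hQ := integrable_mul_conjPoissonKer hh hy x
  have hP := integrable_mul_poissonKer hh hy x
  simp only [convolution_lsmul, smul_eq_mul]
  rw [sq, sq, ← integral_prod_mul, ← integral_prod_mul,
    ← integral_sub (hQ.mul_prod hQ) (hP.mul_prod hP)]
  refine integral_congr_ae (.of_forall fun t => ?_)
  simp only [pairKer]
  ring

-- By `integral_pairKer_sub`, this integral equals that of `(h ⋆ poissonKer y) ^ 2`.
lemma integral_sq_convolution_conjPoissonKer_le (hh : Integrable h) (hM : ∀ x, |h x| ≤ M)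
    (hy : 0 < y) :
    Integrable (fun x => (h ⋆ conjPoissonKer y) x ^ 2) ∧
      ∫ x, (h ⋆ conjPoissonKer y) x ^ 2 ≤ π ^ 2 * M * ∫ x, |h x| := by
  have hpair := integrable_mul_mul_pairKer hh hy
  have hdiff : Integrable fun x =>
      (h ⋆ conjPoissonKer y) x ^ 2 - (h ⋆ poissonKer y) x ^ 2 :=
    hpair.integral_prod_left.congr (.of_forall fun x => integral_mul_mul_pairKer hh hy x)
  have hzero : ∫ x, ((h ⋆ conjPoissonKer y) x ^ 2 - (h ⋆ poissonKer y) x ^ 2) = 0 := by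
    simp_rw [← integral_mul_mul_pairKer hh hy]
    refine (integral_integral_swap hpair).trans ?_
    simp only [integral_const_mul, integral_pairKer_sub hy, mul_zero, integral_zero]
  obtain ⟨hP, hPle⟩ := integral_sq_convolution_poissonKer_le hh hM hy
  have hQ : Integrable fun x => (h ⋆ conjPoissonKer y) x ^ 2 := by
    simpa only [Pi.add_def, sub_add_cancel] using hdiff.add hP
  rw [integral_sub hQ hP] at hzero
  exact ⟨hQ, by linarith⟩

lemma aestronglyMeasurable_convolution {k : ℝ → ℝ} (hh : AEStronglyMeasurable h)
    (hk : AEStronglyMeasurable k) : AEStronglyMeasurable (h ⋆ k) :=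
  (hh.convolution_integrand (ContinuousLinearMap.lsmul ℝ ℝ) hk).integral_prod_right'

lemma integrableOn_convolution_conjPoissonKer (hh : Integrable h) (hM : ∀ x, |h x| ≤ M)
    (hy : 0 < y) (a b : ℝ) : IntegrableOn (h ⋆ conjPoissonKer y) (Icc a b) := by
  have hdom : IntegrableOn (fun x => 1 + (h ⋆ conjPoissonKer y) x ^ 2) (Icc a b) :=
    (integrableOn_const (by simp)).add
      (integral_sq_convolution_conjPoissonKer_le hh hM hy).1.integrableOn
  refine hdom.mono' (aestronglyMeasurable_convolution hh.1
    (continuous_conjPoissonKer hy).aestronglyMeasurable).restrict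
    (.of_forall fun x => ?_)
  rw [norm_eq_abs, ← sq_abs]
  nlinarith [sq_nonneg (|(h ⋆ conjPoissonKer y) x| - 1), abs_nonneg ((h ⋆ conjPoissonKer y) x)]

lemma setIntegral_abs_convolution_conjPoissonKer_le (hh : Integrable h) (hM : ∀ x, |h x| ≤ M)
    (hy : 0 < y) {a b : ℝ} (hab : a ≤ b) :
    ∫ x in Icc a b, |(h ⋆ conjPoissonKer y) x| ≤ (b - a) / 2 * M + π ^ 2 / 2 * ∫ x, |h x| := by
  rcases ((abs_nonneg _).trans (hM 0)).eq_or_lt with rfl | hMpos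
  · obtain rfl : h = 0 := funext fun x => abs_nonpos_iff.1 (hM x)
    simp
  obtain ⟨hsq, hsq_le⟩ := integral_sq_convolution_conjPoissonKer_le hh hM hy
  have hdom : IntegrableOn (fun x => M / 2 + (h ⋆ conjPoissonKer y) x ^ 2 / (2 * M)) (Icc a b) :=
    (integrableOn_const (by simp)).add (hsq.integrableOn.div_const _)
  have hyoung : ∀ u : ℝ, |u| ≤ M / 2 + u ^ 2 / (2 * M) := fun u => by
    rw [← sq_abs u, ← sub_nonneg]
    exact (by positivity : (0 : ℝ) ≤ (|u| - M) ^ 2 / (2 * M)).trans_eq (by field_simp; ring)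
  calc ∫ x in Icc a b, |(h ⋆ conjPoissonKer y) x|
      ≤ ∫ x in Icc a b, (M / 2 + (h ⋆ conjPoissonKer y) x ^ 2 / (2 * M)) :=
        integral_mono (integrableOn_convolution_conjPoissonKer hh hM hy a b).abs hdom
          fun x => hyoung _
    _ = (b - a) / 2 * M + (∫ x in Icc a b, (h ⋆ conjPoissonKer y) x ^ 2) / (2 * M) := by
        rw [integral_add (integrable_const _) (hsq.integrableOn.div_const _), integral_div (2 * M),
          setIntegral_const, volume_real_Icc_of_le hab, smul_eq_mul]
        ring
    _ ≤ (b - a) / 2 * M + (π ^ 2 * M * ∫ x, |h x|) / (2 * M) := by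
        gcongr
        exact (setIntegral_le_integral hsq (.of_forall fun x => sq_nonneg _)).trans hsq_le
    _ = (b - a) / 2 * M + π ^ 2 / 2 * ∫ x, |h x| := by field_simp

end PoissonIntegrals

section LebesguePoints

lemma setIntegral_closedBall_comp_sub_mul (F : ℝ → ℝ) (x : ℝ) {r R : ℝ} (hr : 0 < r)
    (hR : 0 ≤ R) :
    ∫ u in Metric.closedBall 0 R, F (x - r * u) =
      r⁻¹ * ∫ v in Metric.closedBall x (R * r), F v := by
  have hscale := Measure.setIntegral_comp_smul volume (fun v => F (x + v))
    (Metric.closedBall (0 : ℝ) R) (neg_ne_zero.2 hr.ne')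
  rw [smul_closedBall _ _ hR, smul_zero, norm_neg, norm_of_nonneg hr.le] at hscale
  have htranslate := (measurePreserving_add_left volume x).setIntegral_preimage_emb
    (measurableEmbedding_addLeft x) F (Metric.closedBall x (R * r))
  rw [preimage_add_closedBall, sub_self] at htranslate
  rw [mul_comm R r] at htranslate ⊢
  simpa [abs_of_pos hr, ← sub_eq_add_neg, ← htranslate] using hscale

lemma setIntegral_closedBall_abs_comp_sub_mul_sub (h : ℝ → ℝ) (x : ℝ) {r R : ℝ} (hr : 0 < r)
    (hR : 0 < R) :
    ∫ u in Metric.closedBall 0 R, |h (x - r * u) - h x| =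
      2 * R * ⨍ v in Metric.closedBall x (R * r), ‖h v - h x‖ := by
  rw [setIntegral_closedBall_comp_sub_mul (fun v => |h v - h x|) x hr hR.le, setAverage_eq,
    measureReal_def, volume_closedBall, ENNReal.toReal_ofReal (by positivity), smul_eq_mul]
  simp only [norm_eq_abs]
  field_simp

lemma ae_tendsto_setIntegral_abs_comp_sub_mul_sub {h : ℝ → ℝ} (hh : LocallyIntegrable h) :
    ∀ᵐ x, ∀ R > 0, Tendsto (fun r => ∫ u in Metric.closedBall 0 R, |h (x - r * u) - h x|)
      (𝓝[>] 0) (𝓝 0) := by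
  filter_upwards [IsUnifLocDoublingMeasure.ae_tendsto_average_norm_sub volume hh 1]
    with x hx R hR
  have hradius : Tendsto (fun r => R * r) (𝓝[>] 0) (𝓝[>] 0) := by
    refine tendsto_nhdsWithin_iff.2 ⟨?_, ?_⟩
    · simpa using ((tendsto_id (x := 𝓝 (0 : ℝ))).const_mul R).mono_left nhdsWithin_le_nhds
    · filter_upwards [self_mem_nhdsWithin] with r hr using mul_pos hR hr
  have haverage := (hx (fun _ => x) (fun r => R * r) hradius (by
    filter_upwards [self_mem_nhdsWithin] with r hr
    simpa using (mul_pos hR hr).le)).const_mul (2 * R)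
  rw [mul_zero] at haverage
  refine haverage.congr' ?_
  filter_upwards [self_mem_nhdsWithin] with r hr
  exact (setIntegral_closedBall_abs_comp_sub_mul_sub h x hr hR).symm

variable {ι : Type*} {l : Filter ι} {D : ι → ℝ → ℝ} {C : ℝ}

lemma tendsto_integral_mul_of_hasCompactSupport (hDm : ∀ i, Measurable (D i))
    (hDC : ∀ i u, |D i u| ≤ C)
    (hD : ∀ R > 0, Tendsto (fun i => ∫ u in Metric.closedBall 0 R, |D i u|) l (𝓝 0))
    {g : ℝ → ℝ} (hg : Continuous g) (hgc : HasCompactSupport g) :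
    Tendsto (fun i => ∫ u, D i u * g u) l (𝓝 0) := by
  obtain ⟨R, hRpos, hR⟩ := hgc.isCompact.isBounded.subset_closedBall_lt 0 0
  obtain ⟨K, hK⟩ := hgc.exists_bound_of_continuous hg
  have hlim := (hD R hRpos).const_mul K
  rw [mul_zero] at hlim
  refine squeeze_zero_norm (fun i => ?_) hlim
  have hDi : IntegrableOn (fun u => |D i u|) (Metric.closedBall 0 R) :=
    Measure.integrableOn_of_bounded measure_closedBall_lt_top.ne
      (hDm i).abs.aestronglyMeasurable
      (.of_forall fun u => (norm_norm (D i u)).trans_le (hDC i u))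
  have hsupp : ∫ u in Metric.closedBall 0 R, D i u * g u = ∫ u, D i u * g u :=
    setIntegral_eq_integral_of_forall_compl_eq_zero fun u hu => by
      rw [image_eq_zero_of_notMem_tsupport fun hmem => hu (hR hmem), mul_zero]
  rw [← hsupp, ← integral_const_mul]
  refine norm_integral_le_of_norm_le (hDi.const_mul K) (.of_forall fun u => ?_)
  rw [norm_mul, mul_comm]
  exact mul_le_mul_of_nonneg_right (hK u) (norm_nonneg _)

lemma tendsto_integral_mul_of_tendsto_setIntegral_abs (hDm : ∀ i, Measurable (D i))
    (hDC : ∀ i u, |D i u| ≤ C)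
    (hD : ∀ R > 0, Tendsto (fun i => ∫ u in Metric.closedBall 0 R, |D i u|) l (𝓝 0))
    {k : ℝ → ℝ} (hk : Integrable k) :
    Tendsto (fun i => ∫ u, D i u * k u) l (𝓝 0) := by
  rw [Metric.tendsto_nhds]
  intro η hη
  set C' := |C| + 1
  have hC' : 0 < C' := by positivity
  have hDC' : ∀ i u, ‖D i u‖ ≤ C' := fun i u =>
    (hDC i u).trans ((le_abs_self C).trans (lt_add_one _).le)
  obtain ⟨g, hgc, hkg, hg, hgi⟩ :=
    hk.exists_hasCompactSupport_integral_sub_le (ε := η / (2 * C')) (by positivity)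
  filter_upwards [Metric.tendsto_nhds.1 (tendsto_integral_mul_of_hasCompactSupport hDm hDC hD
    hg hgc) (η / 2) (half_pos hη)] with i hi
  rw [dist_zero_right] at hi ⊢
  have hint : ∀ {f : ℝ → ℝ}, Integrable f → Integrable fun u => D i u * f u := fun hf =>
    hf.bdd_mul (c := C') (hDm i).aestronglyMeasurable (.of_forall (hDC' i))
  have hrest : ‖∫ u, D i u * (k u - g u)‖ ≤ η / 2 := calc
    ‖∫ u, D i u * (k u - g u)‖ ≤ ∫ u, C' * ‖k u - g u‖ :=
      norm_integral_le_of_norm_le ((hk.sub hgi).norm.const_mul C') (.of_forall fun u => by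
        rw [norm_mul]
        exact mul_le_mul_of_nonneg_right (hDC' i u) (norm_nonneg _))
    _ ≤ C' * (η / (2 * C')) := by rw [integral_const_mul]; gcongr
    _ = η / 2 := by field_simp
  have hsplit : ∫ u, D i u * k u = (∫ u, D i u * (k u - g u)) + ∫ u, D i u * g u := by
    rw [← integral_add (hint (f := fun u => k u - g u) (hk.sub hgi)) (hint hgi)]
    simp only [← mul_add, sub_add_cancel]
  rw [hsplit]
  linarith [norm_add_le (∫ u, D i u * (k u - g u)) (∫ u, D i u * g u)]

lemma ae_tendsto_integral_comp_sub_mul {h k : ℝ → ℝ} {M : ℝ} (hm : Measurable h)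
    (hM : ∀ x, |h x| ≤ M) (hk : Integrable k) :
    ∀ᵐ x, Tendsto (fun r => ∫ u, h (x - r * u) * k u) (𝓝[>] 0) (𝓝 (h x * ∫ u, k u)) := by
  have hloc : LocallyIntegrable h :=
    (locallyIntegrable_const M).mono hm.aestronglyMeasurable (.of_forall fun x =>
      (hM x).trans (le_abs_self M))
  filter_upwards [ae_tendsto_setIntegral_abs_comp_sub_mul_sub hloc] with x hx
  have hosc := tendsto_integral_mul_of_tendsto_setIntegral_abs
    (D := fun r u => h (x - r * u) - h x) (C := M + M) (fun r => by fun_prop)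
    (fun r u => (abs_sub _ _).trans (add_le_add (hM _) (hM _))) hx hk
  have hlim := hosc.add_const (h x * ∫ u, k u)
  rw [zero_add] at hlim
  refine hlim.congr fun r => ?_
  have hint : Integrable fun u => h (x - r * u) * k u :=
    hk.bdd_mul (c := M)
      (hm.comp (by fun_prop : Measurable fun u => x - r * u)).aestronglyMeasurable
      (.of_forall fun u => hM _)
  simp only [sub_mul]
  rw [integral_sub hint (hk.const_mul _), integral_const_mul, sub_add_cancel]

end LebesguePoints

section LogPotential

/-- `h` is measurable, bounded by `M` and compactly supported. On this class the logarithmic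
potential `h ⋆ log` is finite everywhere. -/
structure IsBoundedCompactlySupported (h : ℝ → ℝ) (M : ℝ) : Prop where
  measurable : Measurable h
  abs_le : ∀ x, |h x| ≤ M
  hasCompactSupport : HasCompactSupport h

/-- The logarithmic kernel regularized at height `y`: a primitive of the conjugate Poisson kernel,
equal to `log |x|` for `y = 0`. -/
def logKer (y x : ℝ) : ℝ := log (x ^ 2 + y ^ 2) / 2

lemma logKer_zero : logKer 0 = log := by
  ext x
  simp [logKer]

lemma hasDerivAt_logKer_sub {y : ℝ} (hy : 0 < y) (t x : ℝ) :
    HasDerivAt (fun x => logKer y (x - t)) (conjPoissonKer y (x - t)) x := by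
  have ht := sq_add_sq_pos hy (x - t)
  refine (((hasDerivAt_sq_sub_add_sq y t x).log ht.ne').div_const 2).congr_deriv ?_
  simp only [conjPoissonKer]
  field_simp

lemma abs_logKer_le {y x : ℝ} (hx : x ≠ 0) (hy : y ∈ Icc (0 : ℝ) 1) :
    |logKer y x| ≤ |log x| + x ^ 2 := by
  have hx2 : 0 < x ^ 2 := by positivity
  have hlower : 2 * log x ≤ log (x ^ 2 + y ^ 2) := by
    have := log_le_log hx2 (le_add_of_nonneg_right (sq_nonneg y))
    rwa [log_pow, Nat.cast_ofNat] at this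
  have hupper : log (x ^ 2 + y ^ 2) ≤ x ^ 2 := by
    have := log_le_sub_one_of_pos (by positivity : 0 < x ^ 2 + y ^ 2)
    nlinarith [hy.1, hy.2]
  rw [logKer, _root_.abs_le]
  constructor <;> nlinarith [neg_abs_le (log x), abs_nonneg (log x)]

lemma tendsto_logKer {x : ℝ} (hx : x ≠ 0) :
    Tendsto (fun y => logKer y x) (𝓝 0) (𝓝 (logKer 0 x)) := by
  have hcont : ContinuousAt (fun y => logKer y x) 0 :=
    ((by fun_prop : ContinuousAt (fun y : ℝ => x ^ 2 + y ^ 2) 0).log (by positivity)).div_const 2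
  exact hcont.tendsto

lemma locallyIntegrable_log_sub (x : ℝ) : LocallyIntegrable fun t => log (x - t) := fun z => by
  refine ⟨Icc (z - 1) (z + 1), Icc_mem_nhds (by linarith) (by linarith), ?_⟩
  rw [← intervalIntegrable_iff_integrableOn_Icc_of_le (by linarith)]
  simpa using (intervalIntegral.intervalIntegrable_log' (a := x - (z - 1))
    (b := x - (z + 1))).comp_sub_left x

lemma ae_ne_const (a : ℝ) : ∀ᵐ t : ℝ, t ≠ a := by simp [ae_iff]

lemma locallyIntegrable_abs_log_sub_add_sq (x : ℝ) :
    LocallyIntegrable fun t => |log (x - t)| + (x - t) ^ 2 :=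
  LocallyIntegrable.add
    (fun z => (locallyIntegrable_log_sub x z).imp fun _ hs => ⟨hs.1, hs.2.abs⟩)
    (by fun_prop : Continuous fun t : ℝ => (x - t) ^ 2).locallyIntegrable

namespace IsBoundedCompactlySupported

variable {h : ℝ → ℝ} {M : ℝ}

lemma integrable_mul (hh : IsBoundedCompactlySupported h M) {F : ℝ → ℝ}
    (hF : LocallyIntegrable F) : Integrable fun t => h t * F t := by
  have hon : IntegrableOn (fun t => h t * F t) (tsupport h) :=
    Integrable.bdd_mul (hF.integrableOn_isCompact hh.hasCompactSupport.isCompact)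
      hh.measurable.aestronglyMeasurable (.of_forall hh.abs_le)
  exact (integrableOn_iff_integrable_of_support_subset
    ((Function.support_mul_subset_left h F).trans (subset_tsupport h))).1 hon

lemma integrable (hh : IsBoundedCompactlySupported h M) : Integrable h := by
  simpa using hh.integrable_mul (locallyIntegrable_const (1 : ℝ))

lemma integrable_mul_log_sub (hh : IsBoundedCompactlySupported h M) (x : ℝ) :
    Integrable fun t => h t * log (x - t) :=
  hh.integrable_mul (locallyIntegrable_log_sub x)

lemma integrable_mul_logKer_sub (hh : IsBoundedCompactlySupported h M) {y : ℝ} (hy : 0 < y)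
    (x : ℝ) : Integrable fun t => h t * logKer y (x - t) := by
  have hcont : Continuous fun t => logKer y (x - t) :=
    ((by fun_prop : Continuous fun t : ℝ => (x - t) ^ 2 + y ^ 2).log
      fun t => (sq_add_sq_pos hy _).ne').div_const 2
  exact hh.integrable_mul hcont.locallyIntegrable

lemma intervalIntegral_convolution_conjPoissonKer (hh : IsBoundedCompactlySupported h M)
    {y : ℝ} (hy : 0 < y) {a b : ℝ} (hab : a ≤ b) :
    ∫ z in a..b, (h ⋆ conjPoissonKer y) z = (h ⋆ logKer y) b - (h ⋆ logKer y) a := by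
  have hcont := continuous_conjPoissonKer hy
  have hprod : Integrable (fun p : ℝ × ℝ => h p.2 * conjPoissonKer y (p.1 - p.2))
      ((volume.restrict (Ioc a b)).prod volume) :=
    (hh.integrable.comp_snd _).mul_bdd (c := y⁻¹) (by fun_prop)
      (.of_forall fun p => abs_conjPoissonKer_le_inv hy _)
  simp only [convolution_lsmul, smul_eq_mul]
  rw [intervalIntegral.integral_of_le hab, integral_integral_swap hprod,
    ← integral_sub (hh.integrable_mul_logKer_sub hy b) (hh.integrable_mul_logKer_sub hy a)]
  refine integral_congr_ae (.of_forall fun t => ?_)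
  dsimp only
  rw [integral_const_mul, ← intervalIntegral.integral_of_le hab,
    intervalIntegral.integral_eq_sub_of_hasDerivAt
      (fun z _ => hasDerivAt_logKer_sub hy t z)
      ((by fun_prop : Continuous fun z => conjPoissonKer y (z - t)).intervalIntegrable a b),
    mul_sub]

lemma tendsto_convolution_logKer (hh : IsBoundedCompactlySupported h M) (x : ℝ) :
    Tendsto (fun y => (h ⋆ logKer y) x) (𝓝[>] 0) (𝓝 ((h ⋆ log) x)) := by
  simp only [convolution_lsmul, smul_eq_mul, ← logKer_zero]
  refine tendsto_integral_filter_of_dominated_convergence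
    (fun t => |h t * (|log (x - t)| + (x - t) ^ 2)|) ?_ ?_
    (hh.integrable_mul (locallyIntegrable_abs_log_sub_add_sq x)).abs ?_
  · filter_upwards [self_mem_nhdsWithin] with y hy
    exact (hh.integrable_mul_logKer_sub hy x).aestronglyMeasurable
  · filter_upwards [Ioo_mem_nhdsGT one_pos] with y hy
    filter_upwards [ae_ne_const x] with t ht
    rw [norm_mul, abs_mul, norm_eq_abs, norm_eq_abs,
      abs_of_nonneg (by positivity : 0 ≤ |log (x - t)| + (x - t) ^ 2)]
    gcongr
    exact abs_logKer_le (sub_ne_zero.2 ht.symm) ⟨hy.1.le, hy.2.le⟩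
  · filter_upwards [ae_ne_const x] with t ht
    exact ((tendsto_logKer (sub_ne_zero.2 ht.symm)).mono_left nhdsWithin_le_nhds).const_mul _

lemma tendsto_intervalIntegral_convolution_conjPoissonKer
    (hh : IsBoundedCompactlySupported h M) {a b : ℝ} (hab : a ≤ b) :
    Tendsto (fun y => ∫ z in a..b, (h ⋆ conjPoissonKer y) z) (𝓝[>] 0)
      (𝓝 ((h ⋆ log) b - (h ⋆ log) a)) := by
  refine ((hh.tendsto_convolution_logKer b).sub (hh.tendsto_convolution_logKer a)).congr' ?_
  filter_upwards [self_mem_nhdsWithin] with y hy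
  exact (hh.intervalIntegral_convolution_conjPoissonKer hy hab).symm

lemma sum_abs_intervalIntegral_convolution_conjPoissonKer_le
    (hh : IsBoundedCompactlySupported h M) {y : ℝ} (hy : 0 < y) {a b : ℝ} (hab : a ≤ b)
    {u : ℕ → ℝ} (hu : Monotone u) (hmem : ∀ i, u i ∈ Icc a b) (N : ℕ) :
    ∑ i ∈ Finset.range N, |∫ z in u i..u (i + 1), (h ⋆ conjPoissonKer y) z| ≤
      (b - a) / 2 * M + π ^ 2 / 2 * ∫ x, |h x| := by
  have hint : ∀ c d, IntervalIntegrable (fun z => |(h ⋆ conjPoissonKer y) z|) volume c d :=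
    fun c d => by
      rw [intervalIntegrable_iff]
      exact ((integrableOn_convolution_conjPoissonKer hh.integrable hh.abs_le hy _ _).mono_set
        Ioc_subset_Icc_self).abs
  calc ∑ i ∈ Finset.range N, |∫ z in u i..u (i + 1), (h ⋆ conjPoissonKer y) z|
      ≤ ∑ i ∈ Finset.range N, ∫ z in u i..u (i + 1), |(h ⋆ conjPoissonKer y) z| :=
        Finset.sum_le_sum fun i _ =>
          intervalIntegral.abs_integral_le_integral_abs (hu i.le_succ)
    _ = ∫ z in u 0..u N, |(h ⋆ conjPoissonKer y) z| :=
        intervalIntegral.sum_integral_adjacent_intervals fun _ _ => hint _ _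
    _ ≤ ∫ z in a..b, |(h ⋆ conjPoissonKer y) z| :=
        intervalIntegral.integral_mono_interval (hmem 0).1 (hu N.zero_le) (hmem N).2
          (.of_forall fun _ => abs_nonneg _) (hint a b)
    _ = ∫ z in Icc a b, |(h ⋆ conjPoissonKer y) z| := by
        rw [intervalIntegral.integral_of_le hab, integral_Icc_eq_integral_Ioc]
    _ ≤ (b - a) / 2 * M + π ^ 2 / 2 * ∫ x, |h x| :=
        setIntegral_abs_convolution_conjPoissonKer_le hh.integrable hh.abs_le hy hab

lemma locallyBoundedVariationOn_convolution_log (hh : IsBoundedCompactlySupported h M) :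
    LocallyBoundedVariationOn (h ⋆ log) univ := by
  intro a b _ _
  rw [univ_inter]
  rcases lt_or_ge b a with hba | hab
  · simp [Icc_eq_empty hba.not_ge, BoundedVariationOn]
  suffices hle : eVariationOn (h ⋆ log) (Icc a b) ≤
      ENNReal.ofReal ((b - a) / 2 * M + π ^ 2 / 2 * ∫ x, |h x|) from
    ne_top_of_le_ne_top ENNReal.ofReal_ne_top hle
  refine iSup_le fun ⟨N, u, hu, hmem⟩ => ?_
  simp only [edist_dist, dist_eq]
  rw [← ENNReal.ofReal_sum_of_nonneg fun _ _ => abs_nonneg _]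
  refine ENNReal.ofReal_le_ofReal (le_of_tendsto (tendsto_finsetSum _ fun i _ =>
    (hh.tendsto_intervalIntegral_convolution_conjPoissonKer (hu i.le_succ)).abs) ?_)
  filter_upwards [self_mem_nhdsWithin] with y hy
  exact hh.sum_abs_intervalIntegral_convolution_conjPoissonKer_le hy hab hu hmem N

protected lemma indicator (hhm : Measurable h) (hh : ∀ x, |h x| ≤ M) {S : Set ℝ}
    (hS : MeasurableSet S) (hSb : Bornology.IsBounded S) :
    IsBoundedCompactlySupported (S.indicator h) M where
  measurable := hhm.indicator hS
  abs_le x := (norm_indicator_le_norm_self h x).trans (hh x)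
  hasCompactSupport := .of_support_subset_isCompact hSb.isCompact_closure
    (support_indicator_subset.trans subset_closure)

end IsBoundedCompactlySupported

end LogPotential

section PrincipalValues

lemma measurableSet_lt_abs_sub (r x : ℝ) : MeasurableSet {β : ℝ | r < |x - β|} :=
  measurableSet_lt measurable_const (by fun_prop)

lemma tendsto_setIntegral_lt_abs_sub {F : ℝ → ℝ} (hF : Integrable F) (x : ℝ) :
    Tendsto (fun r => ∫ β in {β : ℝ | r < |x - β|}, F β) (𝓝[>] 0) (𝓝 (∫ β, F β)) := by
  simp_rw [← integral_indicator (measurableSet_lt_abs_sub _ x)]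
  refine tendsto_integral_filter_of_dominated_convergence (fun β => |F β|)
    (.of_forall fun r => hF.aestronglyMeasurable.indicator (measurableSet_lt_abs_sub r x))
    (.of_forall fun r => .of_forall fun β => norm_indicator_le_norm_self _ _) hF.abs ?_
  filter_upwards [ae_ne_const x] with β hβ
  refine tendsto_const_nhds.congr' ?_
  filter_upwards [Ioo_mem_nhdsGT (abs_pos.2 (sub_ne_zero.2 hβ.symm))] with r hr
  exact (indicator_of_mem (show β ∈ {β : ℝ | r < |x - β|} from hr.2) F).symm

end PrincipalValues

section HilbertTransform

/-- The kernel `1 / x` of the Hilbert transform, without the factor `1 / π`, truncated at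
distance `r` from the origin. -/
def truncInv (r x : ℝ) : ℝ := if r < |x| then x⁻¹ else 0

lemma measurable_truncInv (r : ℝ) : Measurable (truncInv r) :=
  measurable_inv.ite (measurableSet_lt measurable_const (by fun_prop)) measurable_const

lemma abs_truncInv_le {r : ℝ} (hr : 0 < r) (x : ℝ) : |truncInv r x| ≤ r⁻¹ := by
  by_cases hx : r < |x|
  · rw [truncInv, if_pos hx, abs_inv]
    exact inv_anti₀ hr hx.le
  · rw [truncInv, if_neg hx, abs_zero]
    positivity

lemma truncInv_neg (r x : ℝ) : truncInv r (-x) = -truncInv r x := by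
  simp only [truncInv, abs_neg, inv_neg]
  split_ifs <;> simp

lemma truncInv_eq_comp_div {r : ℝ} (hr : 0 < r) (x : ℝ) :
    truncInv r x = r⁻¹ * truncInv 1 (x / r) := by
  have hiff : 1 < |x / r| ↔ r < |x| := by rw [abs_div, abs_of_pos hr, one_lt_div hr]
  simp only [truncInv, hiff]
  split_ifs
  · rw [inv_div]
    field_simp
  · rw [mul_zero]

lemma abs_truncInv_sub_conjPoissonKer_le {r : ℝ} (hr : 0 < r) (x : ℝ) :
    |truncInv r x - conjPoissonKer r x| ≤ poissonKer r x := by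
  have hpos := sq_add_sq_pos hr x
  by_cases hx : r < |x|
  · have hx0 : 0 < |x| := hr.trans hx
    have hdiff : x⁻¹ - x / (x ^ 2 + r ^ 2) = r ^ 2 / (x * (x ^ 2 + r ^ 2)) := by
      have := abs_pos.1 hx0
      field_simp
      ring
    rw [truncInv, if_pos hx, conjPoissonKer, poissonKer, hdiff,
      abs_div, abs_mul, abs_of_pos hpos, abs_of_nonneg (sq_nonneg r),
      div_le_div_iff₀ (mul_pos hx0 hpos) hpos]
    nlinarith [mul_lt_mul_of_pos_right hx (mul_pos hr hpos)]
  · rw [truncInv, if_neg hx, zero_sub, abs_neg, conjPoissonKer, poissonKer, abs_div,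
      abs_of_pos hpos]
    gcongr
    exact not_lt.1 hx

/-- The kernel of the error made when the truncated Hilbert transform is replaced by a symmetric
difference quotient of the logarithmic potential, at scale `1`. -/
def logDiffKer (u : ℝ) : ℝ := (log (u + 1) - log (u - 1)) / 2 - truncInv 1 u

lemma measurable_logDiffKer : Measurable logDiffKer := by
  have := measurable_truncInv 1
  unfold logDiffKer
  fun_prop

lemma logDiffKer_neg (u : ℝ) : logDiffKer (-u) = -logDiffKer u := by
  have hplus : log (-u + 1) = log (u - 1) := by rw [← log_neg_eq_log]; ring_nf
  have hminus : log (-u - 1) = log (u + 1) := by rw [← log_neg_eq_log]; ring_nf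
  rw [logDiffKer, logDiffKer, hplus, hminus, truncInv_neg]
  ring

lemma abs_log_one_sub_add_le {v : ℝ} (hv : |v| ≤ 1 / 2) : |log (1 - v) + v| ≤ 2 * v ^ 2 := by
  have htaylor := abs_log_sub_add_sum_range_le (x := v) (by linarith) 1
  simp only [Finset.sum_range_one, zero_add, pow_one, Nat.cast_zero, div_one] at htaylor
  rw [add_comm]
  refine htaylor.trans ?_
  rw [div_le_iff₀ (by linarith), one_add_one_eq_two, sq_abs]
  nlinarith [sq_nonneg v]

lemma abs_logDiffKer_le {u : ℝ} (hu : 2 < |u|) : |logDiffKer u| ≤ 4 * (1 + u ^ 2)⁻¹ := by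
  have hu0 : u ≠ 0 := abs_pos.1 (by linarith)
  have hv : |u⁻¹| < 1 / 2 := by
    rw [abs_inv, inv_lt_comm₀ (by positivity) (by norm_num)]
    simpa using hu
  have hv' := abs_lt.1 hv
  have hlog : log (u + 1) - log (u - 1) = log (1 - -u⁻¹) - log (1 - u⁻¹) := by
    rw [show u + 1 = u * (1 - -u⁻¹) by field_simp; ring,
      show u - 1 = u * (1 - u⁻¹) by field_simp,
      log_mul hu0 (by linarith), log_mul hu0 (by linarith)]
    ring
  have htrunc : truncInv 1 u = u⁻¹ := if_pos (by linarith)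
  have hplus := _root_.abs_le.1 (abs_log_one_sub_add_le (v := -u⁻¹) (by rw [abs_neg]; exact hv.le))
  have hminus := _root_.abs_le.1 (abs_log_one_sub_add_le hv.le)
  have hsq : (2 : ℝ) ^ 2 < u ^ 2 := sq_lt_sq.2 (by rwa [abs_of_pos two_pos])
  calc |logDiffKer u| ≤ 2 * u⁻¹ ^ 2 := by
        rw [logDiffKer, hlog, htrunc, _root_.abs_le]
        constructor <;> linarith
    _ ≤ 4 * (1 + u ^ 2)⁻¹ := by
        rw [inv_pow, ← div_eq_mul_inv, ← div_eq_mul_inv,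
          div_le_div_iff₀ (by positivity) (by positivity)]
        linarith

lemma integrable_logDiffKer : Integrable logDiffKer := by
  have hcompact : IntegrableOn logDiffKer (Icc (-2) 2) := by
    have hlog (c : ℝ) : IntegrableOn (fun u => log (u + c)) (Icc (-2) 2) := by
      rw [← intervalIntegrable_iff_integrableOn_Icc_of_le (by norm_num)]
      simpa using (intervalIntegral.intervalIntegrable_log' (a := -2 + c)
        (b := 2 + c)).comp_add_right c
    have htrunc : IntegrableOn (truncInv 1) (Icc (-2) 2) :=
      Integrable.mono' (integrableOn_const (by simp) (C := (1 : ℝ)))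
        (measurable_truncInv 1).aestronglyMeasurable
        (.of_forall fun u => by simpa using abs_truncInv_le one_pos u)
    exact (((hlog 1).sub (hlog (-1))).div_const 2).sub htrunc
  have htail : IntegrableOn logDiffKer (Icc (-2) 2)ᶜ := by
    refine (integrable_inv_one_add_sq.const_mul 4).integrableOn.mono'
      measurable_logDiffKer.aestronglyMeasurable ?_
    filter_upwards [ae_restrict_mem measurableSet_Icc.compl] with u hu
    exact abs_logDiffKer_le (not_le.1 fun hle => hu (_root_.abs_le.1 hle))
  rw [← integrableOn_univ, ← union_compl_self (Icc (-2 : ℝ) 2)]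
  exact hcompact.union htail

lemma integral_logDiffKer : ∫ u, logDiffKer u = 0 := by
  have hneg := integral_neg_eq_self logDiffKer volume
  simp_rw [logDiffKer_neg, integral_neg] at hneg
  linarith

/-- The Hilbert transform on the line, without the factor `1 / π`. -/
def hilbertTransform (h : ℝ → ℝ) (x : ℝ) : ℝ := pvI (fun β => h β * (x - β)⁻¹) x

lemma setIntegral_mul_inv_eq_convolution (h : ℝ → ℝ) (r x : ℝ) :
    ∫ β in {β : ℝ | r < |x - β|}, h β * (x - β)⁻¹ = (h ⋆ truncInv r) x := by
  rw [← integral_indicator (measurableSet_lt_abs_sub r x)]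
  refine integral_congr_ae (.of_forall fun β => ?_)
  simp [truncInv, indicator_apply]

lemma hasDerivAt_symmetric_difference {L : ℝ → ℝ} {L' x : ℝ} (hL : HasDerivAt L L' x) :
    HasDerivAt (fun r => L (x + r) - L (x - r)) (2 * L') 0 := by
  have hplus : HasDerivAt (fun r => L (x + r)) L' 0 :=
    HasDerivAt.comp_const_add x 0 (by rwa [add_zero])
  have hminus : HasDerivAt (fun r => L (x - r)) (-L') 0 :=
    HasDerivAt.comp_const_sub x 0 (by rwa [sub_zero])
  exact (hplus.sub hminus).congr_deriv (by ring)

namespace IsBoundedCompactlySupported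

variable {h : ℝ → ℝ} {M r : ℝ}

lemma integrable_mul_truncInv (hh : IsBoundedCompactlySupported h M) (hr : 0 < r) (x : ℝ) :
    Integrable fun t => h t * truncInv r (x - t) :=
  hh.integrable.mul_bdd (c := r⁻¹)
    ((measurable_truncInv r).comp (measurable_const_sub x)).aestronglyMeasurable
    (.of_forall fun _ => abs_truncInv_le hr _)

lemma abs_convolution_truncInv_le (hh : IsBoundedCompactlySupported h M) (hr : 0 < r) (x : ℝ) :
    |(h ⋆ truncInv r) x| ≤ |(h ⋆ conjPoissonKer r) x| + π * M := by
  have hQ := integrable_mul_conjPoissonKer hh.integrable hr x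
  have hP : Integrable fun t => poissonKer r (x - t) := (integrable_poissonKer hr).comp_sub_left x
  have hdiff : |(h ⋆ truncInv r) x - (h ⋆ conjPoissonKer r) x| ≤ π * M := by
    simp only [convolution_lsmul, smul_eq_mul]
    rw [← integral_sub (hh.integrable_mul_truncInv hr x) hQ]
    calc |∫ t, (h t * truncInv r (x - t) - h t * conjPoissonKer r (x - t))|
        ≤ ∫ t, M * poissonKer r (x - t) := by
          rw [← norm_eq_abs]
          refine norm_integral_le_of_norm_le (hP.const_mul M) (.of_forall fun t => ?_)
          rw [← mul_sub, norm_mul]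
          exact mul_le_mul (hh.abs_le t) (abs_truncInv_sub_conjPoissonKer_le hr _)
            (abs_nonneg _) ((abs_nonneg _).trans (hh.abs_le t))
      _ = π * M := by
          rw [integral_const_mul, integral_sub_left_eq_self, integral_poissonKer hr, mul_comm]
  linarith [abs_sub_abs_le_abs_sub ((h ⋆ truncInv r) x) ((h ⋆ conjPoissonKer r) x)]

lemma convolution_truncInv_eq (hh : IsBoundedCompactlySupported h M) (hr : 0 < r) (x : ℝ) :
    (h ⋆ truncInv r) x = ((h ⋆ log) (x + r) - (h ⋆ log) (x - r)) / (2 * r) -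
      ∫ u, h (x - r * u) * logDiffKer u := by
  have hscale : ∫ u, h (x - r * u) * logDiffKer u =
      ∫ t, r⁻¹ * (h t * logDiffKer ((x - t) / r)) := by
    have hsmul := Measure.integral_comp_mul_left
      (fun v => h (x - v) * logDiffKer (v / r)) r
    simp_rw [mul_div_cancel_left₀ _ hr.ne'] at hsmul
    rw [hsmul, abs_of_pos (by positivity), smul_eq_mul, integral_const_mul,
      ← integral_sub_left_eq_self (fun t => h t * logDiffKer ((x - t) / r)) volume x]
    simp only [sub_sub_cancel]
  have hpointwise : ∀ᵐ t, r⁻¹ * (h t * logDiffKer ((x - t) / r)) =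
      (h t * log (x + r - t) - h t * log (x - r - t)) / (2 * r) - h t * truncInv r (x - t) := by
    filter_upwards [ae_ne_const (x + r), ae_ne_const (x - r)] with t hplus hminus
    rw [logDiffKer, truncInv_eq_comp_div hr,
      show (x - t) / r + 1 = (x + r - t) / r by field_simp; ring,
      show (x - t) / r - 1 = (x - r - t) / r by field_simp; ring,
      log_div (sub_ne_zero.2 hplus.symm) hr.ne', log_div (sub_ne_zero.2 hminus.symm) hr.ne']
    field_simp
    ring
  have hlog : Integrable fun t => (h t * log (x + r - t) - h t * log (x - r - t)) / (2 * r) :=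
    ((hh.integrable_mul_log_sub (x + r)).sub (hh.integrable_mul_log_sub (x - r))).div_const _
  simp only [convolution_lsmul, smul_eq_mul]
  rw [hscale, integral_congr_ae hpointwise, integral_sub hlog (hh.integrable_mul_truncInv hr x),
    integral_div, integral_sub (hh.integrable_mul_log_sub _) (hh.integrable_mul_log_sub _)]
  ring

-- The potential `h ⋆ log` has locally bounded variation, hence is differentiable almost everywhere.
-- Its symmetric difference quotients are the truncated transforms up to the convolution of `h` with
-- a rescaled kernel of mean zero.
lemma ae_exists_tendsto_convolution_truncInv (hh : IsBoundedCompactlySupported h M) :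
    ∀ᵐ x, ∃ l, Tendsto (fun r => (h ⋆ truncInv r) x) (𝓝[>] 0) (𝓝 l) := by
  filter_upwards [ae_tendsto_integral_comp_sub_mul hh.measurable hh.abs_le integrable_logDiffKer,
    hh.locallyBoundedVariationOn_convolution_log.ae_differentiableAt] with x herror hdiff
  rw [integral_logDiffKer, mul_zero] at herror
  have hslope := (hasDerivAt_symmetric_difference hdiff.hasDerivAt).tendsto_slope_zero_right
  refine ⟨_, ((hslope.div_const 2).sub herror).congr' ?_⟩
  filter_upwards [self_mem_nhdsWithin] with r hr
  rw [hh.convolution_truncInv_eq hr]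
  simp only [zero_add, add_zero, sub_zero, sub_self, smul_eq_mul]
  ring

lemma ae_tendsto_convolution_truncInv (hh : IsBoundedCompactlySupported h M) :
    ∀ᵐ x, Tendsto (fun r => (h ⋆ truncInv r) x) (𝓝[>] 0) (𝓝 (hilbertTransform h x)) := by
  filter_upwards [hh.ae_exists_tendsto_convolution_truncInv] with x hx
  simpa only [hilbertTransform, pvI, setIntegral_mul_inv_eq_convolution]
    using tendsto_nhds_limUnder hx

lemma setLIntegral_enorm_convolution_truncInv_le (hh : IsBoundedCompactlySupported h M)
    (hr : 0 < r) {a b : ℝ} (hab : a ≤ b) :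
    ∫⁻ x in Icc a b, ‖(h ⋆ truncInv r) x‖ₑ ≤
      ENNReal.ofReal ((b - a) / 2 * M + π ^ 2 / 2 * (∫ x, |h x|) + π * M * (b - a)) := by
  have hM : 0 ≤ M := (abs_nonneg _).trans (hh.abs_le 0)
  have hint := (integrableOn_convolution_conjPoissonKer hh.integrable hh.abs_le hr a b).abs
  have hconst : IntegrableOn (fun _ => π * M) (Icc a b) := integrableOn_const (by simp)
  calc ∫⁻ x in Icc a b, ‖(h ⋆ truncInv r) x‖ₑ
      ≤ ∫⁻ x in Icc a b, ENNReal.ofReal (|(h ⋆ conjPoissonKer r) x| + π * M) :=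
        lintegral_mono fun x => by
          rw [enorm_eq_ofReal_abs]
          exact ENNReal.ofReal_le_ofReal (hh.abs_convolution_truncInv_le hr x)
    _ = ENNReal.ofReal (∫ x in Icc a b, (|(h ⋆ conjPoissonKer r) x| + π * M)) :=
        (ofReal_integral_eq_lintegral_ofReal (hint.add hconst)
          (.of_forall fun x => add_nonneg (abs_nonneg _) (mul_nonneg pi_nonneg hM))).symm
    _ ≤ _ := by
        refine ENNReal.ofReal_le_ofReal ?_
        rw [integral_add hint hconst, setIntegral_const, smul_eq_mul, volume_real_Icc_of_le hab,
          mul_comm (b - a) (π * M)]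
        gcongr
        exact setIntegral_abs_convolution_conjPoissonKer_le hh.integrable hh.abs_le hr hab

lemma setLIntegral_enorm_hilbertTransform_le (hh : IsBoundedCompactlySupported h M) {a b : ℝ}
    (hab : a ≤ b) :
    ∫⁻ x in Icc a b, ‖hilbertTransform h x‖ₑ ≤
      ENNReal.ofReal ((b - a) / 2 * M + π ^ 2 / 2 * (∫ x, |h x|) + π * M * (b - a)) := by
  obtain ⟨r, -, hpos, hr⟩ := exists_seq_strictAnti_tendsto' (zero_lt_one (α := ℝ))
  have hr' : Tendsto r atTop (𝓝[>] 0) :=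
    tendsto_nhdsWithin_iff.2 ⟨hr, .of_forall fun n => (hpos n).1⟩
  calc ∫⁻ x in Icc a b, ‖hilbertTransform h x‖ₑ
      = ∫⁻ x in Icc a b, liminf (fun n => ‖(h ⋆ truncInv (r n)) x‖ₑ) atTop := by
        refine lintegral_congr_ae (ae_restrict_of_ae ?_)
        filter_upwards [hh.ae_tendsto_convolution_truncInv] with x hx
        exact (hx.comp hr').enorm.liminf_eq.symm
    _ ≤ liminf (fun n => ∫⁻ x in Icc a b, ‖(h ⋆ truncInv (r n)) x‖ₑ) atTop :=
        lintegral_liminf_le' fun n => (aestronglyMeasurable_convolution hh.integrable.1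
          (measurable_truncInv _).aestronglyMeasurable).enorm.restrict
    _ ≤ liminf (fun _ => ENNReal.ofReal
          ((b - a) / 2 * M + π ^ 2 / 2 * (∫ x, |h x|) + π * M * (b - a))) atTop :=
        liminf_le_liminf (.of_forall fun n =>
          hh.setLIntegral_enorm_convolution_truncInv_le (hpos n).1 hab)
    _ = _ := liminf_const _

end IsBoundedCompactlySupported

end HilbertTransform

section FlatFunctions

lemma abs_le_of_mem_uIcc {x y z : ℝ} (hz : z ∈ uIcc x y) : |z| ≤ max |x| |y| := by
  rcases le_total x y with h | h
  · rw [uIcc_of_le h] at hz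
    exact abs_le_max_abs_abs hz.1 hz.2
  · rw [uIcc_of_ge h] at hz
    rw [max_comm]
    exact abs_le_max_abs_abs hz.1 hz.2

/-- `f` is `C^{1,1}` on `(-δ, δ)`, with `A` a Lipschitz constant of its derivative, and vanishes to
first order at `0`. -/
structure IsFlatC11 (δ A : ℝ) (f : ℝ → ℝ) : Prop where
  differentiableAt : ∀ x, |x| < δ → DifferentiableAt ℝ f x
  abs_deriv_sub_le : ∀ x y, |x| < δ → |y| < δ → |deriv f x - deriv f y| ≤ A * |x - y|
  apply_zero : f 0 = 0
  deriv_zero : deriv f 0 = 0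

namespace IsFlatC11

variable {δ A : ℝ} {f : ℝ → ℝ} {x y m : ℝ}

lemma nonneg (hf : IsFlatC11 δ A f) (hδ : 0 < δ) : 0 ≤ A := by
  have hlip := (abs_nonneg _).trans (hf.abs_deriv_sub_le (δ / 2) 0
    (by rw [abs_of_pos (half_pos hδ)]; exact half_lt_self hδ) (by rwa [abs_zero]))
  rw [sub_zero] at hlip
  exact nonneg_of_mul_nonneg_left hlip (by positivity)

lemma congr {f₁ : ℝ → ℝ} (hf : IsFlatC11 δ A f) (hδ : 0 < δ) (h : EqOn f₁ f (Ioo (-δ) δ)) :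
    IsFlatC11 δ A f₁ := by
  have heq : ∀ x, |x| < δ → f₁ =ᶠ[𝓝 x] f := fun x hx =>
    h.eventuallyEq_of_mem (Ioo_mem_nhds (abs_lt.1 hx).1 (abs_lt.1 hx).2)
  have h0 : |(0 : ℝ)| < δ := by rwa [abs_zero]
  exact
    { differentiableAt := fun x hx => (hf.differentiableAt x hx).congr_of_eventuallyEq (heq x hx)
      abs_deriv_sub_le := fun x y hx hy => by
        rw [(heq x hx).deriv_eq, (heq y hy).deriv_eq]
        exact hf.abs_deriv_sub_le x y hx hy
      apply_zero := (heq 0 h0).eq_of_nhds.trans hf.apply_zero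
      deriv_zero := (heq 0 h0).deriv_eq.trans hf.deriv_zero }

lemma measurable_indicator (hf : IsFlatC11 δ A f) : Measurable ((Ioo (-δ) δ).indicator f) := by
  have hcont : ContinuousOn f (Ioo (-δ) δ) := fun x hx =>
    (hf.differentiableAt x (abs_lt.2 hx)).continuousAt.continuousWithinAt
  rw [← piecewise_eq_indicator]
  exact hcont.measurable_piecewise continuousOn_const measurableSet_Ioo

lemma abs_deriv_le (hf : IsFlatC11 δ A f) (hx : |x| < δ) : |deriv f x| ≤ A * |x| := by
  simpa [hf.deriv_zero] using
    hf.abs_deriv_sub_le x 0 hx (by rw [abs_zero]; exact (abs_nonneg x).trans_lt hx)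

lemma abs_sub_le (hf : IsFlatC11 δ A f) (hm : m < δ) (hx : |x| ≤ m) (hy : |y| ≤ m) :
    |f x - f y| ≤ A * m * |x - y| := by
  have hA := hf.nonneg ((abs_nonneg x).trans_lt (hx.trans_lt hm))
  have hmem : ∀ z ∈ uIcc x y, |z| ≤ m := fun z hz =>
    (abs_le_of_mem_uIcc hz).trans (max_le hx hy)
  exact (convex_uIcc x y).norm_image_sub_le_of_norm_deriv_le
    (fun z hz => hf.differentiableAt z ((hmem z hz).trans_lt hm))
    (fun z hz => (hf.abs_deriv_le ((hmem z hz).trans_lt hm)).trans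
      (mul_le_mul_of_nonneg_left (hmem z hz) hA)) right_mem_uIcc left_mem_uIcc

lemma abs_sub_sub_deriv_mul_le (hf : IsFlatC11 δ A f) (hx : |x| < δ) (hy : |y| < δ) :
    |f x - f y - deriv f x * (x - y)| ≤ A * |x - y| ^ 2 := by
  have hA := hf.nonneg ((abs_nonneg x).trans_lt hx)
  have hmem : ∀ z ∈ uIcc x y, |z| < δ := fun z hz =>
    (abs_le_of_mem_uIcc hz).trans_lt (max_lt hx hy)
  have hmvt := (convex_uIcc x y).norm_image_sub_le_of_norm_hasDerivWithin_le
    (f := fun z => f z - deriv f x * z) (f' := fun z => deriv f z - deriv f x)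
    (C := A * |x - y|)
    (fun z hz => ((hf.differentiableAt z (hmem z hz)).hasDerivAt.sub
      ((hasDerivAt_const_mul (deriv f x)))).hasDerivWithinAt)
    (fun z hz => (hf.abs_deriv_sub_le z x (hmem z hz) hx).trans <|
      mul_le_mul_of_nonneg_left (by rw [abs_sub_comm x y]; exact abs_sub_left_of_mem_uIcc hz) hA)
    right_mem_uIcc left_mem_uIcc
  calc |f x - f y - deriv f x * (x - y)|
      = ‖f x - deriv f x * x - (f y - deriv f x * y)‖ := by
        rw [norm_eq_abs]
        ring_nf
    _ ≤ A * |x - y| * |x - y| := hmvt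
    _ = A * |x - y| ^ 2 := by ring

lemma abs_slope_le (hf : IsFlatC11 δ A f) (hm : m < δ) (hx : |x| ≤ m) (hy : |y| ≤ m) :
    |slope f y x| ≤ A * m := by
  have hm0 : 0 ≤ m := (abs_nonneg x).trans hx
  have hA := hf.nonneg (hm0.trans_lt hm)
  rw [slope_def_field, abs_div]
  exact div_le_of_le_mul₀ (abs_nonneg _) (by positivity) (hf.abs_sub_le hm hx hy)

lemma abs_slope_sub_deriv_le (hf : IsFlatC11 δ A f) (hx : |x| < δ) (hy : |y| < δ) (hxy : x ≠ y) :
    |slope f y x - deriv f x| ≤ A * |x - y| := by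
  have hsub := sub_ne_zero.2 hxy
  rw [slope_def_field, div_sub' hsub, abs_div, div_le_iff₀ (abs_pos.2 hsub), mul_comm (x - y),
    mul_assoc, ← sq]
  exact hf.abs_sub_sub_deriv_mul_le hx hy

lemma abs_slope_sub_slope_zero_le (hf : IsFlatC11 δ A f) (hy : |y| < δ) (hxy : |x| < |y|) :
    |slope f y x - slope f y 0| ≤ A * |x| := by
  have hmem : ∀ z ∈ uIcc 0 x, |z| < |y| := fun z hz =>
    (abs_le_of_mem_uIcc hz).trans_lt
      (max_lt (by rw [abs_zero]; exact (abs_nonneg x).trans_lt hxy) hxy)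
  have hne : ∀ z ∈ uIcc 0 x, z - y ≠ 0 := fun z hz h0 =>
    (hmem z hz).ne (by rw [sub_eq_zero.1 h0])
  have hderiv : ∀ z ∈ uIcc 0 x, HasDerivAt (slope f y)
      ((deriv f z * (z - y) - (f z - f y) * 1) / (z - y) ^ 2) z := fun z hz => by
    simp only [slope_fun_def_field]
    exact ((hf.differentiableAt z ((hmem z hz).trans hy)).hasDerivAt.sub_const (f y)).div
      ((hasDerivAt_id z).sub_const y) (hne z hz)
  refine ((convex_uIcc 0 x).norm_image_sub_le_of_norm_hasDerivWithin_le
    (fun z hz => (hderiv z hz).hasDerivWithinAt) (fun z hz => ?_)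
    left_mem_uIcc right_mem_uIcc).trans_eq (by rw [sub_zero, norm_eq_abs])
  have hsq : 0 < (z - y) ^ 2 := by have := hne z hz; positivity
  rw [norm_eq_abs, abs_div, abs_of_pos hsq, div_le_iff₀ hsq, ← sq_abs (z - y), ← abs_neg, mul_one,
    neg_sub]
  exact hf.abs_sub_sub_deriv_mul_le ((hmem z hz).trans hy) hy

end IsFlatC11

end FlatFunctions

section FirstKernel

lemma abs_conjPoissonKer_one_sub_le (p q : ℝ) :
    |conjPoissonKer 1 p - conjPoissonKer 1 q| ≤ |p - q| := by
  have hfactor : conjPoissonKer 1 p - conjPoissonKer 1 q =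
      (p - q) * ((1 - p * q) / ((p ^ 2 + 1 ^ 2) * (q ^ 2 + 1 ^ 2))) := by
    unfold conjPoissonKer
    field_simp
    ring
  have hpos : 0 < (p ^ 2 + 1 ^ 2) * (q ^ 2 + 1 ^ 2) := by positivity
  rw [hfactor, abs_mul]
  refine mul_le_of_le_one_right (abs_nonneg _) ?_
  rw [abs_div, abs_of_pos hpos, div_le_one hpos, _root_.abs_le]
  constructor <;> nlinarith [sq_nonneg (p - q), sq_nonneg (p + q), sq_nonneg (p * q)]

lemma abs_conjPoissonKer_one_le (q : ℝ) : |conjPoissonKer 1 q| ≤ |q| := by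
  simpa [conjPoissonKer] using abs_conjPoissonKer_one_sub_le q 0

/-- The kernel of `T_{1,f}`, without the cutoff. -/
def t1Ker (f : ℝ → ℝ) (α β : ℝ) : ℝ := (f α - f β) / ((α - β) ^ 2 + (f α - f β) ^ 2)

lemma measurable_t1Ker {f : ℝ → ℝ} (hf : Measurable f) (α : ℝ) : Measurable (t1Ker f α) := by
  unfold t1Ker
  fun_prop

lemma t1Ker_eq_conjPoissonKer_slope_div (f : ℝ → ℝ) (α β : ℝ) :
    t1Ker f α β = conjPoissonKer 1 (slope f β α) / (α - β) := by
  rw [t1Ker, slope_def_field, conjPoissonKer]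
  rcases eq_or_ne α β with rfl | hne
  · simp
  · have := sub_ne_zero.2 hne
    field_simp
    ring

namespace IsFlatC11

variable {δ A : ℝ} {f : ℝ → ℝ} {α β : ℝ}

lemma abs_t1Ker_zero_le (hf : IsFlatC11 δ A f) (hβ : |β| < δ) : |t1Ker f 0 β| ≤ A := by
  rw [t1Ker_eq_conjPoissonKer_slope_div, zero_sub, abs_div, abs_neg]
  exact div_le_of_le_mul₀ (abs_nonneg _) (hf.nonneg ((abs_nonneg β).trans_lt hβ))
    ((abs_conjPoissonKer_one_le _).trans (hf.abs_slope_le hβ (by simp) le_rfl))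

lemma abs_t1Ker_sub_le (hf : IsFlatC11 δ A f) (hα : |α| < δ) (hβ : |β| < δ) :
    |t1Ker f α β - conjPoissonKer 1 (deriv f α) / (α - β)| ≤ A := by
  have hA := hf.nonneg ((abs_nonneg α).trans_lt hα)
  rw [t1Ker_eq_conjPoissonKer_slope_div, ← sub_div, abs_div]
  rcases eq_or_ne α β with rfl | hne
  · simpa using hA
  · exact div_le_of_le_mul₀ (abs_nonneg _) hA ((abs_conjPoissonKer_one_sub_le _ _).trans
      (hf.abs_slope_sub_deriv_le hα hβ hne))

lemma abs_t1Ker_sub_t1Ker_zero_le (hf : IsFlatC11 δ A f) (hα : 2 * |α| ≤ |β|) (hβ : |β| < δ)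
    (hβ0 : 0 < |β|) : |t1Ker f α β - t1Ker f 0 β| ≤ 4 * A * |α| / |β| := by
  have hA := hf.nonneg (hβ0.trans hβ)
  have hdist : |β| / 2 ≤ |α - β| := by
    linarith [abs_sub_abs_le_abs_sub β α, abs_sub_comm α β]
  have hαβ : 0 < |α - β| := by linarith
  have hsplit : t1Ker f α β - t1Ker f 0 β =
      (conjPoissonKer 1 (slope f β α) - conjPoissonKer 1 (slope f β 0)) / (α - β) +
        conjPoissonKer 1 (slope f β 0) * α / (β * (α - β)) := by
    have hβ_ne := abs_pos.1 hβ0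
    have hsub_ne := abs_pos.1 hαβ
    rw [t1Ker_eq_conjPoissonKer_slope_div, t1Ker_eq_conjPoissonKer_slope_div, zero_sub]
    field_simp
    ring
  have hslope := (abs_conjPoissonKer_one_sub_le _ _).trans
    (hf.abs_slope_sub_slope_zero_le hβ (by linarith [abs_nonneg α] : |α| < |β|))
  have hzero := (abs_conjPoissonKer_one_le _).trans (hf.abs_slope_le hβ (x := 0) (by simp) le_rfl)
  rw [hsplit]
  calc _ ≤ A * |α| / (|β| / 2) + A * |β| * |α| / (|β| * (|β| / 2)) := by
        refine (abs_add_le _ _).trans ?_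
        rw [abs_div, abs_div, abs_mul, abs_mul]
        gcongr
    _ = 4 * A * |α| / |β| := by
        field_simp
        ring

end IsFlatC11

end FirstKernel

section Cutoff

namespace IsCutoff

variable {ψ : ℝ → ℝ} {s x : ℝ}

lemma exists_lipschitzWith (hψ : IsCutoff ψ) : ∃ L, LipschitzWith L ψ := by
  obtain ⟨hsmooth, -, -, hzero, -⟩ := hψ
  have hcompact : HasCompactSupport ψ := HasCompactSupport.intro (isCompact_Icc (a := -1) (b := 1))
    fun x hx => hzero x <| not_le.1 fun hle => hx (_root_.abs_le.1 hle)
  exact (hsmooth.of_le (m := 1) (mod_cast le_top)).lipschitzWith_of_hasCompactSupport hcompact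
    one_ne_zero

lemma continuous_scut (hψ : IsCutoff ψ) (s : ℝ) : Continuous (scut ψ s) :=
  hψ.1.continuous.comp (continuous_id.div_const s)

lemma scut_neg (hψ : IsCutoff ψ) (s x : ℝ) : scut ψ s (-x) = scut ψ s x := by
  rw [scut, neg_div, hψ.2.1, scut]

lemma abs_scut_le_one (hψ : IsCutoff ψ) (s x : ℝ) : |scut ψ s x| ≤ 1 := by
  have hmem := hψ.2.2.1 (x / s)
  rw [scut, abs_of_nonneg hmem.1]
  exact hmem.2

lemma scut_eq_one (hψ : IsCutoff ψ) (hs : 0 < s) (hx : |x| ≤ s / 2) : scut ψ s x = 1 := by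
  refine hψ.2.2.2.2 _ ?_
  rw [abs_div, abs_of_pos hs, div_le_iff₀ hs]
  linarith

lemma scut_eq_zero (hψ : IsCutoff ψ) (hs : 0 < s) (hx : s < |x|) : scut ψ s x = 0 := by
  refine hψ.2.2.2.1 _ ?_
  rwa [abs_div, abs_of_pos hs, one_lt_div hs]

end IsCutoff

lemma abs_scut_sub_le {ψ : ℝ → ℝ} {L : NNReal} (hL : LipschitzWith L ψ) {s : ℝ} (hs : 0 < s)
    (x y : ℝ) : |scut ψ s x - scut ψ s y| ≤ L * |x - y| / s := by
  have hdist := hL.dist_le_mul (x / s) (y / s)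
  rwa [dist_eq, dist_eq, ← sub_div, abs_div, abs_of_pos hs, ← mul_div_assoc] at hdist

end Cutoff

section Oscillation

lemma integral_indicator_inv_abs_add {a R : ℝ} (ha : 0 ≤ a) (hR : 0 < R) :
    ∫ x, (Icc (-a) a).indicator (fun x => (|x| + R)⁻¹) x = 2 * log ((a + R) / R) := by
  have heven (x : ℝ) : (Icc (-a) a).indicator (fun x => (|x| + R)⁻¹) x =
      (Iic a).indicator (fun x => (x + R)⁻¹) |x| := by
    simp only [indicator_apply, mem_Icc, mem_Iic, _root_.abs_le]
  simp_rw [heven]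
  rw [integral_comp_abs, setIntegral_indicator measurableSet_Iic, Ioi_inter_Iic,
    ← intervalIntegral.integral_of_le ha, intervalIntegral.integral_comp_add_right (fun x => x⁻¹),
    zero_add, integral_inv_of_pos hR (by linarith)]

lemma integrable_indicator_inv_abs_add {R : ℝ} (hR : 0 < R) (a : ℝ) :
    Integrable ((Icc (-a) a).indicator fun x => (|x| + R)⁻¹) := by
  rw [integrable_indicator_iff measurableSet_Icc]
  exact ((continuous_abs.add_const R).inv₀ fun x => by positivity).continuousOn.integrableOn_compact
    isCompact_Icc

lemma pvI_add_eq {F G : ℝ → ℝ} {x l : ℝ} (hF : Integrable F)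
    (hG : ∀ r > 0, IntegrableOn G {β | r < |x - β|})
    (hl : Tendsto (fun r => ∫ β in {β | r < |x - β|}, G β) (𝓝[>] 0) (𝓝 l)) :
    pvI (F + G) x = (∫ β, F β) + l := by
  refine (((tendsto_setIntegral_lt_abs_sub hF x).add hl).congr' ?_).limUnder_eq
  filter_upwards [self_mem_nhdsWithin] with r hr
  exact (integral_add hF.integrableOn (hG r hr)).symm

/-- The integrand of `T_{1,f}h(α)`, with the cutoff at scale `s`. -/
def t1Integrand (ψ : ℝ → ℝ) (s : ℝ) (f h : ℝ → ℝ) (α β : ℝ) : ℝ :=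
  t1Ker f α β * h β * scut ψ s (α - β)

variable {ψ f h : ℝ → ℝ} {δ A s R M α β : ℝ} {L : NNReal}

lemma measurable_t1Integrand (hψ : IsCutoff ψ) (hf : Measurable f) (hh : Measurable h) (s α : ℝ) :
    Measurable (t1Integrand ψ s f h α) :=
  ((measurable_t1Ker hf α).mul hh).mul ((hψ.continuous_scut s).measurable.comp
    (measurable_const_sub α))

lemma t1Integrand_congr (hψ : IsCutoff ψ) (hs : 0 < s) {f' h' : ℝ → ℝ} (hα : |α| < s)
    (hf : EqOn f f' (Ioo (-(2 * s)) (2 * s))) (hh : EqOn h h' (Ioo (-(2 * s)) (2 * s))) :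
    t1Integrand ψ s f h α = t1Integrand ψ s f' h' α := by
  ext β
  by_cases hβ : |β| < 2 * s
  · simp only [t1Integrand, t1Ker, hf (abs_lt.1 hβ), hh (abs_lt.1 hβ),
      hf (abs_lt.1 (by linarith : |α| < 2 * s))]
  · have hzero : scut ψ s (α - β) = 0 := hψ.scut_eq_zero hs <| by
      linarith [abs_sub_abs_le_abs_sub β α, abs_sub_comm α β]
    simp only [t1Integrand, hzero, mul_zero]

lemma integral_abs_indicator_Ioo_le (hR : 0 ≤ R) (hh : ∀ x, |h x| ≤ M) :
    ∫ x, |(Ioo (-R) R).indicator h x| ≤ M * (2 * R) := by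
  calc ∫ x, |(Ioo (-R) R).indicator h x| = ∫ x in Ioo (-R) R, |h x| := by
        simp_rw [← norm_eq_abs, norm_indicator_eq_indicator_norm]
        exact integral_indicator measurableSet_Ioo
    _ ≤ M * volume.real (Ioo (-R) R) := (le_abs_self _).trans <|
        norm_setIntegral_le_of_norm_le_const (f := fun x => |h x|) measure_Ioo_lt_top
          fun x _ => by rw [norm_eq_abs, abs_abs]; exact hh x
    _ = M * (2 * R) := by
        rw [volume_real_Ioo_of_le (by linarith)]
        ring

namespace IsFlatC11

lemma abs_cutoff_t1Ker_sub_near_le (hf : IsFlatC11 δ A f) (hψ : IsCutoff ψ) (hs : 0 < s)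
    (hsδ : 2 * s < δ) (hRs : R ≤ s / 8) (hα : |α| < R) (hβ : |β| < 2 * R) :
    |t1Ker f α β * scut ψ s (α - β) - t1Ker f 0 β * scut ψ s (0 - β) -
      conjPoissonKer 1 (deriv f α) * (α - β)⁻¹| ≤ 2 * A := by
  rw [hψ.scut_eq_one hs (by linarith [abs_sub α β]),
    hψ.scut_eq_one hs (by rw [zero_sub, abs_neg]; linarith), mul_one, mul_one, sub_right_comm,
    ← div_eq_mul_inv, two_mul]
  exact (abs_sub _ _).trans (add_le_add (hf.abs_t1Ker_sub_le (by linarith) (by linarith))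
    (hf.abs_t1Ker_zero_le (by linarith)))

lemma abs_cutoff_t1Ker_sub_far_le (hf : IsFlatC11 δ A f) (hψ : IsCutoff ψ)
    (hL : LipschitzWith L ψ) (hs : 0 < s) (hsδ : 2 * s < δ) (hβ : 2 * |α| ≤ |β|)
    (hβ0 : 0 < |β|) (hβs : |β| ≤ 2 * s) :
    |t1Ker f α β * scut ψ s (α - β) - t1Ker f 0 β * scut ψ s (0 - β)| ≤
      (4 + 2 * L) * A * |α| / |β| := by
  have hA := hf.nonneg (by linarith)
  have hker := hf.abs_t1Ker_sub_t1Ker_zero_le hβ (by linarith) hβ0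
  have hcut : |scut ψ s (α - β) - scut ψ s (0 - β)| ≤ 2 * L * |α| / |β| := by
    refine (abs_scut_sub_le hL hs _ _).trans ?_
    rw [sub_sub_sub_cancel_right, sub_zero, div_le_div_iff₀ hs hβ0]
    nlinarith [mul_le_mul_of_nonneg_left hβs (by positivity : 0 ≤ L * |α|)]
  calc _ = |(t1Ker f α β - t1Ker f 0 β) * scut ψ s (α - β) +
          t1Ker f 0 β * (scut ψ s (α - β) - scut ψ s (0 - β))| := by ring_nf
    _ ≤ 4 * A * |α| / |β| * 1 + A * (2 * L * |α| / |β|) := by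
        refine (abs_add_le _ _).trans ?_
        rw [abs_mul, abs_mul]
        gcongr
        · exact hψ.abs_scut_le_one _ _
        · exact hf.abs_t1Ker_zero_le (by linarith)
    _ = (4 + 2 * L) * A * |α| / |β| := by ring

-- Near `α` the kernel is a multiple of the Hilbert kernel up to a bounded error; away from `α` it
-- differs from the kernel at `0` by `O(|α| / |β|)`.
lemma abs_t1Integrand_sub_le (hf : IsFlatC11 δ A f) (hψ : IsCutoff ψ) (hL : LipschitzWith L ψ)
    (hs : 0 < s) (hsδ : 2 * s < δ) (hRs : R ≤ s / 8) (hα : |α| < R) (hh : |h β| ≤ M) :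
    |t1Integrand ψ s f h α β - t1Integrand ψ s f h 0 β - conjPoissonKer 1 (deriv f α) *
        ((Ioo (-(2 * R)) (2 * R)).indicator h β * (α - β)⁻¹)| ≤
      (6 + 3 * L) * A * M * R *
        (Icc (-(2 * s)) (2 * s)).indicator (fun β => (|β| + R)⁻¹) β := by
  have hA := hf.nonneg (by linarith)
  have hR : 0 < R := (abs_nonneg α).trans_lt hα
  have hM : 0 ≤ M := (abs_nonneg _).trans hh
  simp only [indicator_apply, mem_Ioo, mem_Icc, ← abs_lt, ← _root_.abs_le, t1Integrand]
  rcases lt_or_ge |β| (2 * R) with hnear | hfar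
  · rw [if_pos hnear, if_pos (by linarith)]
    calc _ = |t1Ker f α β * scut ψ s (α - β) - t1Ker f 0 β * scut ψ s (0 - β) -
          conjPoissonKer 1 (deriv f α) * (α - β)⁻¹| * |h β| := by
          rw [← abs_mul]
          ring_nf
      _ ≤ 2 * A * M := mul_le_mul (hf.abs_cutoff_t1Ker_sub_near_le hψ hs hsδ hRs hα hnear) hh
          (abs_nonneg _) (by positivity)
      _ ≤ (6 + 3 * L) * A * M * R * (|β| + R)⁻¹ := by
          rw [← div_eq_mul_inv, le_div_iff₀ (by positivity)]
          nlinarith [mul_nonneg hA hM, mul_nonneg (mul_nonneg hA hM) (by positivity : 0 ≤ L * R)]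
  rw [if_neg hfar.not_gt, zero_mul, mul_zero, sub_zero]
  split_ifs with hβs
  · calc _ = |t1Ker f α β * scut ψ s (α - β) - t1Ker f 0 β * scut ψ s (0 - β)| * |h β| := by
          rw [← abs_mul]
          ring_nf
      _ ≤ (4 + 2 * L) * A * |α| / |β| * M := mul_le_mul (hf.abs_cutoff_t1Ker_sub_far_le hψ hL hs
          hsδ (by linarith) (by linarith) hβs) hh (abs_nonneg _) (by positivity)
      _ ≤ (4 + 2 * L) * A * R / (2 / 3 * (|β| + R)) * M := by
          gcongr
          linarith
      _ = (6 + 3 * L) * A * M * R * (|β| + R)⁻¹ := by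
          field_simp
          ring
  · rw [hψ.scut_eq_zero hs (by linarith [abs_sub_abs_le_abs_sub β α, abs_sub_comm α β]),
      hψ.scut_eq_zero hs (by rw [zero_sub, abs_neg]; linarith)]
    simp

lemma integrable_t1Integrand_zero (hf : IsFlatC11 δ A f) (hfm : Measurable f) (hψ : IsCutoff ψ)
    (hs : 0 < s) (hsδ : s < δ) (hhm : Measurable h) (hh : ∀ x, |h x| ≤ M) :
    Integrable (t1Integrand ψ s f h 0) := by
  have hbound : Integrable ((Icc (-s) s).indicator fun _ : ℝ => A * M * 1) :=
    (integrableOn_const isCompact_Icc.measure_ne_top).integrable_indicator measurableSet_Icc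
  refine hbound.mono' (measurable_t1Integrand hψ hfm hhm s 0).aestronglyMeasurable
    (.of_forall fun β => ?_)
  have hA := hf.nonneg (by linarith)
  have hM := (abs_nonneg _).trans (hh β)
  simp only [indicator_apply, mem_Icc, ← _root_.abs_le, t1Integrand, norm_eq_abs]
  split_ifs with hβ
  · rw [abs_mul, abs_mul]
    gcongr
    exacts [hf.abs_t1Ker_zero_le (by linarith), hh β, hψ.abs_scut_le_one _ _]
  · rw [hψ.scut_eq_zero hs (by rw [zero_sub, abs_neg]; linarith)]
    simp

lemma abs_pvI_t1Integrand_sub_le (hf : IsFlatC11 δ A f) (hfm : Measurable f) (hψ : IsCutoff ψ)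
    (hL : LipschitzWith L ψ) (hs : 0 < s) (hsδ : 2 * s < δ) (hRs : R ≤ s / 8) (hα : |α| < R)
    (hhm : Measurable h) (hh : ∀ x, |h x| ≤ M)
    (hlim : Tendsto (fun r => ((Ioo (-(2 * R)) (2 * R)).indicator h ⋆ truncInv r) α) (𝓝[>] 0)
      (𝓝 (hilbertTransform ((Ioo (-(2 * R)) (2 * R)).indicator h) α))) :
    |pvI (t1Integrand ψ s f h α) α - ∫ β, t1Integrand ψ s f h 0 β| ≤
      A * R * |hilbertTransform ((Ioo (-(2 * R)) (2 * R)).indicator h) α| +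
        2 * (6 + 3 * L) * A * M * R * log ((2 * s + R) / R) := by
  have hR : 0 < R := (abs_nonneg α).trans_lt hα
  set h₀ := (Ioo (-(2 * R)) (2 * R)).indicator h
  set G : ℝ → ℝ := fun β => conjPoissonKer 1 (deriv f α) * (h₀ β * (α - β)⁻¹)
  set D : ℝ → ℝ := t1Integrand ψ s f h α - t1Integrand ψ s f h 0 - G
  have hbdd : IsBoundedCompactlySupported h₀ M := .indicator hhm hh measurableSet_Ioo
    (Metric.isBounded_Ioo _ _)
  have hzero := hf.integrable_t1Integrand_zero hfm hψ hs (by linarith) hhm hh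
  have hbound : ∀ β, ‖D β‖ ≤ _ := fun β =>
    hf.abs_t1Integrand_sub_le hψ hL hs hsδ hRs hα (hh β)
  have hbound_int := (integrable_indicator_inv_abs_add hR (2 * s)).const_mul
    ((6 + 3 * L) * A * M * R)
  have hD : Integrable D := hbound_int.mono'
    (((measurable_t1Integrand hψ hfm hhm s α).sub (measurable_t1Integrand hψ hfm hhm s 0)).sub
      (((hbdd.measurable).mul (measurable_const_sub α).inv).const_mul _)).aestronglyMeasurable
    (.of_forall hbound)
  have hG : ∀ r > 0, IntegrableOn G {β | r < |α - β|} := fun r hr => by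
    rw [← integrable_indicator_iff (measurableSet_lt_abs_sub r α)]
    refine ((hbdd.integrable_mul_truncInv hr α).const_mul (conjPoissonKer 1 (deriv f α))).congr
      (.of_forall fun β => ?_)
    simp [G, truncInv, indicator_apply]
  have hpv := pvI_add_eq (hD.add hzero) hG <| by
    simpa only [G, integral_const_mul, setIntegral_mul_inv_eq_convolution] using
      hlim.const_mul (conjPoissonKer 1 (deriv f α))
  rw [show t1Integrand ψ s f h α = D + t1Integrand ψ s f h 0 + G by simp only [D]; abel, hpv,
    integral_add' hD hzero, add_right_comm, add_sub_cancel_right, add_comm]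
  refine (abs_add_le _ _).trans (add_le_add ?_ ?_)
  · rw [abs_mul]
    gcongr
    exact (abs_conjPoissonKer_one_le _).trans ((hf.abs_deriv_le (by linarith)).trans
      (mul_le_mul_of_nonneg_left hα.le (hf.nonneg (by linarith))))
  · refine (norm_integral_le_of_norm_le hbound_int (.of_forall hbound)).trans_eq ?_
    rw [integral_const_mul, integral_indicator_inv_abs_add (by positivity) hR]
    ring

lemma setLIntegral_enorm_pvI_t1Integrand_sub_le (hf : IsFlatC11 δ A f) (hfm : Measurable f)
    (hψ : IsCutoff ψ) (hL : LipschitzWith L ψ) (hs : 0 < s) (hsδ : 2 * s < δ) (hR : 0 < R)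
    (hRs : R ≤ s / 8) (hhm : Measurable h) (hh : ∀ x, |h x| ≤ M) :
    ∫⁻ α in Ioo (-R) R, ‖pvI (t1Integrand ψ s f h α) α - ∫ β, t1Integrand ψ s f h 0 β‖ₑ ≤
      ENNReal.ofReal ((1 + 2 * π ^ 2 + 2 * π + 4 * (6 + 3 * L) * log ((2 * s + R) / R)) *
        A * M * R ^ 2) := by
  have hA := hf.nonneg (by linarith)
  have hM : 0 ≤ M := (abs_nonneg _).trans (hh 0)
  have hlog : 0 ≤ log ((2 * s + R) / R) := log_nonneg ((one_le_div hR).2 (by linarith))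
  set h₀ := (Ioo (-(2 * R)) (2 * R)).indicator h
  have hbdd : IsBoundedCompactlySupported h₀ M := .indicator hhm hh measurableSet_Ioo
    (Metric.isBounded_Ioo _ _)
  have hnorm : ∫ x, |h₀ x| ≤ M * (2 * (2 * R)) := integral_abs_indicator_Ioo_le (by positivity) hh
  calc _ ≤ ∫⁻ α in Icc (-R) R, (ENNReal.ofReal (A * R) * ‖hilbertTransform h₀ α‖ₑ +
          ENNReal.ofReal (2 * (6 + 3 * L) * A * M * R * log ((2 * s + R) / R))) := by
        refine (setLIntegral_mono_ae' measurableSet_Ioo ?_).trans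
          (lintegral_mono_set Ioo_subset_Icc_self)
        filter_upwards [hbdd.ae_tendsto_convolution_truncInv] with α hlim hα
        rw [enorm_eq_ofReal_abs, enorm_eq_ofReal_abs, ← ENNReal.ofReal_mul (by positivity),
          ← ENNReal.ofReal_add (by positivity) (by positivity)]
        exact ENNReal.ofReal_le_ofReal <|
          hf.abs_pvI_t1Integrand_sub_le hfm hψ hL hs hsδ hRs (abs_lt.2 hα) hhm hh hlim
    _ ≤ ENNReal.ofReal (A * R) *
          ENNReal.ofReal ((R - -R) / 2 * M + π ^ 2 / 2 * (M * (2 * (2 * R))) + π * M * (R - -R)) +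
        ENNReal.ofReal (2 * (6 + 3 * L) * A * M * R * log ((2 * s + R) / R)) *
          ENNReal.ofReal (R - -R) := by
        rw [lintegral_add_right _ measurable_const, lintegral_const_mul' _ _ ENNReal.ofReal_ne_top,
          setLIntegral_const, volume_Icc]
        gcongr
        refine (hbdd.setLIntegral_enorm_hilbertTransform_le (by linarith)).trans ?_
        gcongr
    _ = _ := by
        rw [sub_neg_eq_add, ← ENNReal.ofReal_mul (by positivity),
          ← ENNReal.ofReal_mul (by positivity),
          ← ENNReal.ofReal_add (by positivity) (by positivity)]
        ring_nf

end IsFlatC11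

end Oscillation

section Symmetrization

/-- For a kernel `k(a, x)` odd in `x`, the sum of `k(β + x, x)` and of its value at `-x`. Passing to
it turns the principal value of `∫ k(α, α - β) dα` into an absolutely convergent integral. -/
def symmetrized (k : ℝ → ℝ → ℝ) (β x : ℝ) : ℝ := k (β + x) x - k (β - x) x

variable {k : ℝ → ℝ → ℝ} {β : ℝ}

lemma symmetrized_zero (k : ℝ → ℝ → ℝ) (β : ℝ) : symmetrized k β 0 = 0 := by
  simp [symmetrized]

lemma symmetrized_neg (hk : ∀ a x, k a (-x) = -k a x) (β x : ℝ) :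
    symmetrized k β (-x) = symmetrized k β x := by
  simp only [symmetrized, hk, sub_neg_eq_add, ← sub_eq_add_neg]
  ring

lemma setIntegral_symmetrized (hk : ∀ a x, k a (-x) = -k a x) {r : ℝ}
    (hint : IntegrableOn (fun x => k (β + x) x) {x | r < |x|}) :
    ∫ x in {x | r < |x|}, symmetrized k β x =
      2 * ∫ α in {α | r < |β - α|}, k α (α - β) := by
  have hneg := Measure.measurePreserving_neg (volume : Measure ℝ)
  have hneg_emb := (MeasurableEquiv.neg ℝ).measurableEmbedding
  have hpre : (fun x : ℝ => -x) ⁻¹' {x | r < |x|} = {x | r < |x|} := by ext; simp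
  have hreflect : ∫ x in {x | r < |x|}, -k (β - x) x = ∫ x in {x | r < |x|}, k (β + x) x := by
    simpa only [hpre, ← sub_eq_add_neg, hk] using
      hneg.setIntegral_preimage_emb hneg_emb (fun x => k (β + x) x) {x | r < |x|}
  have hreflect_int : IntegrableOn (fun x => -k (β - x) x) {x | r < |x|} := by
    simpa only [hpre, Function.comp_def, ← sub_eq_add_neg, hk] using
      (hneg.integrableOn_comp_preimage hneg_emb).2 hint
  have htranslate : ∫ α in {α | r < |β - α|}, k α (α - β) = ∫ x in {x | r < |x|}, k (β + x) x := by
    simpa only [Set.preimage_ofPred_eq, add_sub_cancel, abs_sub_comm _ β] using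
      (measurePreserving_sub_right volume β).setIntegral_preimage_emb
        (measurableEmbedding_subRight β) (fun x => k (β + x) x) {x | r < |x|}
  simp only [symmetrized, sub_eq_add_neg (k _ _)]
  rw [integral_add hint hreflect_int, hreflect, htranslate, two_mul]

lemma pvI_eq_half_integral_symmetrized (hk : ∀ a x, k a (-x) = -k a x)
    (hint : ∀ r > 0, IntegrableOn (fun x => k (β + x) x) {x | r < |x|})
    (hsymm : Integrable (symmetrized k β)) :
    pvI (fun α => k α (α - β)) β = 1 / 2 * ∫ x, symmetrized k β x := by
  refine Tendsto.limUnder_eq ?_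
  refine ((tendsto_setIntegral_lt_abs_sub hsymm 0).const_mul (1 / 2)).congr' ?_
  filter_upwards [self_mem_nhdsWithin] with r hr
  simp only [zero_sub, abs_neg]
  rw [setIntegral_symmetrized hk (hint r hr)]
  ring

lemma integral_integral_symmetrized_eq_zero
    (hsymm : Integrable (Function.uncurry (symmetrized k)))
    (hint : ∀ x, Integrable fun a => k a x) : ∫ β, ∫ x, symmetrized k β x = 0 := by
  rw [integral_integral_swap hsymm]
  refine integral_eq_zero_of_ae (.of_forall fun x => ?_)
  simp only [symmetrized]
  rw [integral_sub ((hint x).comp_add_right x) ((hint x).comp_sub_right x),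
    integral_add_right_eq_self (k · x), integral_sub_right_eq_self (k · x), sub_self]
  rfl

end Symmetrization

section AdjointKernel

/-- The width of a thin strip around the origin: comparable to `ε` on `[-r, r]`, and Lipschitz on
`[-m, m]` with a constant proportional to `m`. -/
structure IsThinWidth (ε r K : ℝ) (X : ℝ → ℝ) : Prop where
  measurable : Measurable X
  le_apply : ∀ a, |a| ≤ r → ε ≤ X a
  apply_le : ∀ a, |a| ≤ r → X a ≤ K * ε
  abs_sub_le : ∀ m ≤ r, ∀ a b, |a| ≤ m → |b| ≤ m → |X a - X b| ≤ K * m * |a - b|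

/-- A bump at scale `ε`: a function supported in `[-t, t]` and dominated by the Poisson kernel at
height `ε`, with the corresponding decay of its derivative. -/
structure IsPoissonBump (ε t Λ : ℝ) (Φ : ℝ → ℝ) : Prop where
  differentiable : Differentiable ℝ Φ
  abs_le : ∀ a, |Φ a| ≤ poissonKer ε a
  abs_deriv_le : ∀ a, |deriv Φ a| ≤ Λ * ε / (|a| + ε) ^ 3
  eq_zero : ∀ a, t < |a| → Φ a = 0

/-- The kernel of `H*` applied to a test function, in the variables `a = α` and `x = α - β`: here
`X` is the width `X̃` and `Φ` is the product of the test function and the cutoff in `α`. -/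
def adjointKer (ψ : ℝ → ℝ) (t : ℝ) (X Φ : ℝ → ℝ) (a x : ℝ) : ℝ :=
  x⁻¹ * (X a ^ 2 / (x ^ 2 + X a ^ 2)) * Φ a * scut ψ t x

variable {ψ X Φ : ℝ → ℝ} {ε r t K Λ y y' a b x z β d : ℝ}

lemma poissonKer_le_two_mul_div_sq (hε : 0 < ε) (a : ℝ) :
    poissonKer ε a ≤ 2 * ε / (|a| + ε) ^ 2 := by
  rw [poissonKer, div_le_div_iff₀ (sq_add_sq_pos hε a) (by positivity), ← sq_abs a]
  nlinarith [mul_nonneg hε.le (sq_nonneg (|a| - ε))]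

lemma div_sq_add_sq_le_poissonKer (hε : 0 < ε) (hy : ε ≤ y) (hyK : y ≤ K * ε) (x : ℝ) :
    y / (x ^ 2 + y ^ 2) ≤ K * poissonKer ε x := by
  have : 0 ≤ K * ε := hε.le.trans (hy.trans hyK)
  rw [poissonKer, ← mul_div_assoc]
  gcongr

lemma sq_div_sq_add_sq_le_poissonKer (hε : 0 < ε) (hy : ε ≤ y) (hyK : y ≤ K * ε) (x : ℝ) :
    y ^ 2 / (x ^ 2 + y ^ 2) ≤ K ^ 2 * (ε * poissonKer ε x) := by
  calc y ^ 2 / (x ^ 2 + y ^ 2) ≤ (K * ε) ^ 2 / (x ^ 2 + ε ^ 2) := by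
        have : 0 < y := hε.trans_le hy
        gcongr
    _ = K ^ 2 * (ε * poissonKer ε x) := by rw [poissonKer]; ring

lemma abs_sq_div_sub_sq_div_le (hε : 0 < ε) (hy : ε ≤ y) (hyK : y ≤ K * ε) (hy' : ε ≤ y')
    (hyK' : y' ≤ K * ε) (x : ℝ) :
    |y ^ 2 / (x ^ 2 + y ^ 2) - y' ^ 2 / (x ^ 2 + y' ^ 2)| ≤
      2 * K * poissonKer ε x * |y - y'| := by
  have hpos := sq_add_sq_pos (hε.trans_le hy) x
  have hpos' := sq_add_sq_pos (hε.trans_le hy') x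
  have hyp := hε.trans_le hy
  have hyp' := hε.trans_le hy'
  have hfactor : y ^ 2 / (x ^ 2 + y ^ 2) - y' ^ 2 / (x ^ 2 + y' ^ 2) =
      x ^ 2 * (y + y') / ((x ^ 2 + y ^ 2) * (x ^ 2 + y' ^ 2)) * (y - y') := by
    field_simp
    ring
  rw [hfactor, abs_mul, abs_of_nonneg (by positivity)]
  gcongr
  calc x ^ 2 * (y + y') / ((x ^ 2 + y ^ 2) * (x ^ 2 + y' ^ 2))
      ≤ y / (x ^ 2 + y ^ 2) + y' / (x ^ 2 + y' ^ 2) := by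
        rw [div_add_div _ _ hpos.ne' hpos'.ne']
        gcongr
        nlinarith [mul_pos hyp (pow_pos hyp' 2), mul_pos hyp' (pow_pos hyp 2)]
    _ ≤ K * poissonKer ε x + K * poissonKer ε x :=
        add_le_add (div_sq_add_sq_le_poissonKer hε hy hyK x)
          (div_sq_add_sq_le_poissonKer hε hy' hyK' x)
    _ = 2 * K * poissonKer ε x := by ring

lemma IsThinWidth.pos (hX : IsThinWidth ε r K X) (hε : 0 < ε) (hr : 0 ≤ r) : 0 < K := by
  have h0 : |(0 : ℝ)| ≤ r := by simpa using hr
  nlinarith [hX.le_apply 0 h0, hX.apply_le 0 h0]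

namespace IsPoissonBump

lemma abs_sub_le (hΦ : IsPoissonBump ε t Λ Φ) (hε : 0 < ε) (hΛ : 0 ≤ Λ) (hd : 0 < d)
    (h : ∀ z ∈ uIcc a b, d ≤ |z| + ε) : |Φ b - Φ a| ≤ Λ * ε / d ^ 3 * |b - a| := by
  refine (convex_uIcc a b).norm_image_sub_le_of_norm_deriv_le
    (fun z _ => hΦ.differentiable z) (fun z hz => (hΦ.abs_deriv_le z).trans ?_)
    left_mem_uIcc right_mem_uIcc
  have := h z hz
  gcongr

lemma abs_le_of_le (hΦ : IsPoissonBump ε t Λ Φ) (hε : 0 < ε) (hd : 0 < d)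
    (ha : 3 / 4 * d ≤ |a| + ε) : |Φ a| ≤ 4 * ε / d ^ 2 := by
  calc |Φ a| ≤ 2 * ε / (|a| + ε) ^ 2 :=
        (hΦ.abs_le a).trans (poissonKer_le_two_mul_div_sq hε a)
    _ ≤ 2 * ε / (3 / 4 * d) ^ 2 := by gcongr
    _ ≤ 4 * ε / d ^ 2 := by
        rw [div_le_div_iff₀ (by positivity) (by positivity)]
        nlinarith [mul_pos hε (pow_pos hd 2)]

end IsPoissonBump

lemma adjointKer_neg (hψ : IsCutoff ψ) (a x : ℝ) :
    adjointKer ψ t X Φ a (-x) = -adjointKer ψ t X Φ a x := by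
  simp only [adjointKer, hψ.scut_neg, inv_neg, neg_sq]
  ring

lemma measurable_adjointKer (hψ : IsCutoff ψ) (hX : Measurable X) (hΦ : Measurable Φ) :
    Measurable (Function.uncurry (adjointKer ψ t X Φ)) := by
  have hcut := (hψ.continuous_scut t).measurable
  unfold adjointKer Function.uncurry
  fun_prop

lemma abs_adjointKer_le (hψ : IsCutoff ψ) (hX : IsThinWidth ε r K X)
    (hΦ : IsPoissonBump ε t Λ Φ) (hε : 0 < ε) (htr : t ≤ r) (a x : ℝ) :
    |adjointKer ψ t X Φ a x| ≤ |x|⁻¹ * (K ^ 2 * (ε * poissonKer ε x)) * poissonKer ε a := by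
  have hPx := poissonKer_nonneg hε x
  have hPa := poissonKer_nonneg hε a
  rcases lt_or_ge t |a| with ha | ha
  · rw [adjointKer, hΦ.eq_zero a ha, mul_zero, zero_mul, abs_zero]
    positivity
  rw [adjointKer, abs_mul, abs_mul, abs_mul, abs_inv,
    abs_of_nonneg (by positivity : 0 ≤ X a ^ 2 / (x ^ 2 + X a ^ 2))]
  refine (mul_le_of_le_one_right (by positivity) (hψ.abs_scut_le_one t x)).trans ?_
  gcongr
  · exact sq_div_sq_add_sq_le_poissonKer hε (hX.le_apply a (ha.trans htr))
      (hX.apply_le a (ha.trans htr)) x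
  · exact hΦ.abs_le a

lemma symmetrized_adjointKer_eq_zero (hψ : IsCutoff ψ) (hΦ : IsPoissonBump ε t Λ Φ) (ht : 0 < t)
    (h : 2 * t < |β| ∨ t < |x|) : symmetrized (adjointKer ψ t X Φ) β x = 0 := by
  rcases lt_or_ge t |x| with hx | hx
  · simp only [symmetrized, adjointKer, hψ.scut_eq_zero ht hx, mul_zero, sub_zero]
  · have hβ := h.resolve_right hx.not_gt
    have hadd : t < |β + x| := by
      have := abs_sub_abs_le_abs_sub β (-x); rw [abs_neg, sub_neg_eq_add] at this; linarith
    have hsub : t < |β - x| := by have := abs_sub_abs_le_abs_sub β x; linarith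
    simp only [symmetrized, adjointKer, hΦ.eq_zero _ hadd, hΦ.eq_zero _ hsub, mul_zero, zero_mul,
      sub_zero]

lemma abs_symmetrized_adjointKer_far_le (hψ : IsCutoff ψ) (hX : IsThinWidth ε r K X)
    (hΦ : IsPoissonBump ε t Λ Φ) (hε : 0 < ε) (htr : t ≤ r) (hd : 0 < d) (hx : d / 4 < x) :
    |symmetrized (adjointKer ψ t X Φ) β x| ≤
      K ^ 2 * 64 * ε ^ 2 / d ^ 3 * (poissonKer ε (β + x) + poissonKer ε (β - x)) := by
  have hx0 : 0 < x := by linarith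
  have hweight : |x|⁻¹ * (K ^ 2 * (ε * poissonKer ε x)) ≤ K ^ 2 * 64 * ε ^ 2 / d ^ 3 := by
    calc |x|⁻¹ * (K ^ 2 * (ε * poissonKer ε x)) = K ^ 2 * ε ^ 2 / (x * (x ^ 2 + ε ^ 2)) := by
          rw [abs_of_pos hx0, poissonKer]; field_simp
      _ ≤ K ^ 2 * ε ^ 2 / (d / 4 * (d / 4) ^ 2) := by
          gcongr
          exact (pow_le_pow_left₀ (by positivity) hx.le 2).trans
            (le_add_of_nonneg_right (sq_nonneg ε))
      _ = K ^ 2 * 64 * ε ^ 2 / d ^ 3 := by field_simp; norm_num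
  have hk : ∀ a, |adjointKer ψ t X Φ a x| ≤ K ^ 2 * 64 * ε ^ 2 / d ^ 3 * poissonKer ε a :=
    fun a => (abs_adjointKer_le hψ hX hΦ hε htr a x).trans
      (mul_le_mul_of_nonneg_right hweight (poissonKer_nonneg hε a))
  rw [mul_add]
  exact (abs_sub _ _).trans (add_le_add (hk _) (hk _))

lemma three_quarters_mul_le_abs_add (hz : z ∈ uIcc (β - x) (β + x)) (hx : 0 < x)
    (hxβ : x ≤ (|β| + ε) / 4) : 3 / 4 * (|β| + ε) ≤ |z| + ε := by
  rw [uIcc_of_le (by linarith)] at hz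
  have hzβ : |β - z| ≤ x := _root_.abs_le.2 ⟨by linarith [hz.2], by linarith [hz.1]⟩
  linarith [abs_sub_abs_le_abs_sub β z]

lemma IsPoissonBump.abs_symmetric_difference_le (hΦ : IsPoissonBump ε t Λ Φ) (hε : 0 < ε)
    (hΛ : 0 ≤ Λ) (hx : 0 < x) (hxβ : x ≤ (|β| + ε) / 4) :
    |Φ (β + x) - Φ (β - x)| ≤ 5 * Λ * ε / (|β| + ε) ^ 3 * x := by
  calc |Φ (β + x) - Φ (β - x)| ≤ Λ * ε / (3 / 4 * (|β| + ε)) ^ 3 * |β + x - (β - x)| :=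
        hΦ.abs_sub_le hε hΛ (by positivity) fun z hz => three_quarters_mul_le_abs_add hz hx hxβ
    _ = 128 / 27 * (Λ * ε / (|β| + ε) ^ 3 * x) := by
        rw [show β + x - (β - x) = 2 * x by ring, abs_of_pos (by positivity : 0 < 2 * x)]
        field_simp
        ring
    _ ≤ 5 * (Λ * ε / (|β| + ε) ^ 3 * x) := by gcongr; norm_num
    _ = 5 * Λ * ε / (|β| + ε) ^ 3 * x := by ring

lemma IsThinWidth.abs_symmetric_difference_le (hX : IsThinWidth ε r K X) (hε : 0 < ε)
    (hβ : |β| + x ≤ r) (hx : 0 < x) (hxβ : x ≤ (|β| + ε) / 4) :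
    |X (β + x) ^ 2 / (x ^ 2 + X (β + x) ^ 2) - X (β - x) ^ 2 / (x ^ 2 + X (β - x) ^ 2)| ≤
      5 * K ^ 2 * (|β| + ε) * poissonKer ε x * x := by
  have hP := poissonKer_nonneg hε x
  have hK := hX.pos hε ((by positivity : 0 ≤ |β| + x).trans hβ)
  have hadd : |β + x| ≤ |β| + x := (abs_add_le _ _).trans_eq (by rw [abs_of_pos hx])
  have hsub : |β - x| ≤ |β| + x := (abs_sub _ _).trans_eq (by rw [abs_of_pos hx])
  have hXdiff : |X (β + x) - X (β - x)| ≤ K * (5 / 4 * (|β| + ε)) * (2 * x) := by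
    have hlip := hX.abs_sub_le _ hβ _ _ hadd hsub
    rw [show β + x - (β - x) = 2 * x by ring, abs_of_pos (by positivity : 0 < 2 * x)] at hlip
    refine hlip.trans ?_
    gcongr
    linarith
  calc _ ≤ 2 * K * poissonKer ε x * |X (β + x) - X (β - x)| :=
        abs_sq_div_sub_sq_div_le hε (hX.le_apply _ (hadd.trans hβ))
          (hX.apply_le _ (hadd.trans hβ)) (hX.le_apply _ (hsub.trans hβ))
          (hX.apply_le _ (hsub.trans hβ)) x
    _ ≤ 2 * K * poissonKer ε x * (K * (5 / 4 * (|β| + ε)) * (2 * x)) := by gcongr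
    _ = 5 * K ^ 2 * (|β| + ε) * poissonKer ε x * x := by ring

lemma abs_symmetrized_adjointKer_near_le (hψ : IsCutoff ψ) (hX : IsThinWidth ε r K X)
    (hΦ : IsPoissonBump ε t Λ Φ) (hε : 0 < ε) (hΛ : 0 ≤ Λ) (hβ : |β| + x ≤ r)
    (hsq : (|β| + ε) ^ 2 ≤ ε) (hx : 0 < x) (hxβ : x ≤ (|β| + ε) / 4) :
    |symmetrized (adjointKer ψ t X Φ) β x| ≤
      K ^ 2 * (20 + 5 * Λ) * ε ^ 2 / (|β| + ε) ^ 3 * poissonKer ε x := by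
  have hP := poissonKer_nonneg hε x
  have hwidth := hX.abs_symmetric_difference_le hε hβ hx hxβ
  have hbump := hΦ.abs_symmetric_difference_le hε hΛ hx hxβ
  have hadd : |β + x| ≤ r := (abs_add_le _ _).trans (by rwa [abs_of_pos hx])
  have hweight := sq_div_sq_add_sq_le_poissonKer hε (hX.le_apply _ hadd) (hX.apply_le _ hadd) x
  have hΦsub : |Φ (β - x)| ≤ 4 * ε / (|β| + ε) ^ 2 :=
    hΦ.abs_le_of_le hε (by positivity) (three_quarters_mul_le_abs_add left_mem_uIcc hx hxβ)
  set d := |β| + ε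
  have hd : 0 < d := by positivity
  set w := X (β + x) ^ 2 / (x ^ 2 + X (β + x) ^ 2) with hw
  set w' := X (β - x) ^ 2 / (x ^ 2 + X (β - x) ^ 2)
  have hproduct : symmetrized (adjointKer ψ t X Φ) β x =
      x⁻¹ * (w * (Φ (β + x) - Φ (β - x)) + (w - w') * Φ (β - x)) * scut ψ t x := by
    simp only [symmetrized, adjointKer]
    ring
  rw [hproduct, abs_mul, abs_mul, abs_of_pos (inv_pos.2 hx)]
  calc x⁻¹ * |w * (Φ (β + x) - Φ (β - x)) + (w - w') * Φ (β - x)| * |scut ψ t x|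
      ≤ x⁻¹ * (w * |Φ (β + x) - Φ (β - x)| + |w - w'| * |Φ (β - x)|) := by
        refine (mul_le_of_le_one_right (by positivity) (hψ.abs_scut_le_one t x)).trans ?_
        gcongr
        refine (abs_add_le _ _).trans_eq ?_
        rw [abs_mul, abs_mul, abs_of_nonneg (by rw [hw]; positivity : 0 ≤ w)]
    _ ≤ x⁻¹ * (K ^ 2 * (ε * poissonKer ε x) * (5 * Λ * ε / d ^ 3 * x) +
          5 * K ^ 2 * d * poissonKer ε x * x * (4 * ε / d ^ 2)) := by gcongr
    _ = K ^ 2 * ε * poissonKer ε x / d ^ 3 * (5 * Λ * ε + 20 * d ^ 2) := by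
        field_simp
        ring
    _ ≤ K ^ 2 * ε * poissonKer ε x / d ^ 3 * (5 * Λ * ε + 20 * ε) := by gcongr
    _ = K ^ 2 * (20 + 5 * Λ) * ε ^ 2 / d ^ 3 * poissonKer ε x := by ring

lemma abs_symmetrized_adjointKer_of_pos_le (hψ : IsCutoff ψ) (hX : IsThinWidth ε (3 * t) K X)
    (hΦ : IsPoissonBump ε t Λ Φ) (hε : 0 < ε) (hΛ : 0 ≤ Λ) (hεt : ε ≤ t) (htε : 9 * t ^ 2 ≤ ε)
    (hβ : |β| ≤ 2 * t) (hx : 0 < x) :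
    |symmetrized (adjointKer ψ t X Φ) β x| ≤ K ^ 2 * (64 + 5 * Λ) * ε ^ 2 / (|β| + ε) ^ 3 *
      (poissonKer ε x + poissonKer ε (β + x) + poissonKer ε (β - x)) := by
  have hP := poissonKer_nonneg hε
  rcases lt_or_ge ((|β| + ε) / 4) x with hd | hd
  · refine (abs_symmetrized_adjointKer_far_le hψ hX hΦ hε (by linarith) (by positivity)
      hd).trans (mul_le_mul ?_ (by linarith [hP x]) (add_nonneg (hP _) (hP _)) (by positivity))
    gcongr
    linarith
  · have hsq : (|β| + ε) ^ 2 ≤ ε :=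
      (pow_le_pow_left₀ (by positivity) (by linarith : |β| + ε ≤ 3 * t) 2).trans (by linarith)
    refine (abs_symmetrized_adjointKer_near_le hψ hX hΦ hε hΛ (by linarith) hsq hx hd).trans
      (mul_le_mul ?_ (by linarith [hP (β + x), hP (β - x)]) (hP x) (by positivity))
    gcongr
    norm_num

lemma abs_symmetrized_adjointKer_le (hψ : IsCutoff ψ) (hX : IsThinWidth ε (3 * t) K X)
    (hΦ : IsPoissonBump ε t Λ Φ) (hε : 0 < ε) (hΛ : 0 ≤ Λ) (hεt : ε ≤ t) (htε : 9 * t ^ 2 ≤ ε)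
    (β x : ℝ) :
    |symmetrized (adjointKer ψ t X Φ) β x| ≤ K ^ 2 * (64 + 5 * Λ) * ε ^ 2 / (|β| + ε) ^ 3 *
      (poissonKer ε x + poissonKer ε (β + x) + poissonKer ε (β - x)) := by
  have ht : 0 < t := hε.trans_le hεt
  have hnonneg : 0 ≤ K ^ 2 * (64 + 5 * Λ) * ε ^ 2 / (|β| + ε) ^ 3 *
      (poissonKer ε x + poissonKer ε (β + x) + poissonKer ε (β - x)) := by
    have hP := poissonKer_nonneg hε
    exact mul_nonneg (by positivity) (add_nonneg (add_nonneg (hP _) (hP _)) (hP _))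
  by_cases hfar : 2 * t < |β| ∨ t < |x|
  · rwa [symmetrized_adjointKer_eq_zero hψ hΦ ht hfar, abs_zero]
  have hβ : |β| ≤ 2 * t := not_lt.1 fun h => hfar (.inl h)
  rcases lt_trichotomy x 0 with hx | rfl | hx
  · have hreflected := abs_symmetrized_adjointKer_of_pos_le hψ hX hΦ hε hΛ hεt htε hβ
      (neg_pos.2 hx)
    rw [symmetrized_neg (adjointKer_neg hψ), sub_neg_eq_add, ← sub_eq_add_neg] at hreflected
    refine hreflected.trans_eq ?_
    rw [poissonKer_neg]
    ring
  · rwa [symmetrized_zero, abs_zero]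
  · exact abs_symmetrized_adjointKer_of_pos_le hψ hX hΦ hε hΛ hεt htε hβ hx

lemma integrable_poissonKer_triple (hε : 0 < ε) (β : ℝ) :
    Integrable fun x => poissonKer ε x + poissonKer ε (β + x) + poissonKer ε (β - x) :=
  ((integrable_poissonKer hε).add ((integrable_poissonKer hε).comp_add_left β)).add
    ((integrable_poissonKer hε).comp_sub_left β)

lemma integral_poissonKer_triple (hε : 0 < ε) (β : ℝ) :
    ∫ x, (poissonKer ε x + poissonKer ε (β + x) + poissonKer ε (β - x)) = 3 * π := by
  have hP := integrable_poissonKer hε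
  have hsum : Integrable fun x => poissonKer ε x + poissonKer ε (β + x) :=
    hP.add (hP.comp_add_left β)
  rw [integral_add hsum (hP.comp_sub_left β), integral_add hP (hP.comp_add_left β),
    integral_add_left_eq_self (poissonKer ε), integral_sub_left_eq_self (poissonKer ε),
    integral_poissonKer hε]
  ring

lemma measurable_symmetrized {k : ℝ → ℝ → ℝ} (hk : Measurable (Function.uncurry k)) :
    Measurable (Function.uncurry (symmetrized k)) :=
  (hk.comp ((measurable_fst.add measurable_snd).prodMk measurable_snd)).sub
    (hk.comp ((measurable_fst.sub measurable_snd).prodMk measurable_snd))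

/-- A molecule at scale `ε`: a function of mean zero supported in `(-b, b)` and decaying like
`ε ^ 2 / |x| ^ 3` away from `(-ε, ε)`. -/
structure IsMolecule (ε b C : ℝ) (G : ℝ → ℝ) : Prop where
  integrable : Integrable G
  integral_eq_zero : ∫ x, G x = 0
  abs_le : ∀ x, |G x| ≤ C * (ε ^ 2 / (|x| + ε) ^ 3)
  eq_zero : ∀ x, b ≤ |x| → G x = 0

section

variable (hψ : IsCutoff ψ) (hX : IsThinWidth ε (3 * t) K X) (hΦ : IsPoissonBump ε t Λ Φ)
  (hε : 0 < ε) (hΛ : 0 ≤ Λ) (hεt : ε ≤ t) (htε : 9 * t ^ 2 ≤ ε)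

include hψ hX hΦ hε hΛ hεt htε

lemma integrable_symmetrized_adjointKer (β : ℝ) :
    Integrable (symmetrized (adjointKer ψ t X Φ) β) :=
  ((integrable_poissonKer_triple hε β).const_mul _).mono'
    ((measurable_symmetrized (measurable_adjointKer hψ hX.measurable
      hΦ.differentiable.continuous.measurable)).comp measurable_prodMk_left).aestronglyMeasurable
    (.of_forall (abs_symmetrized_adjointKer_le hψ hX hΦ hε hΛ hεt htε β))

lemma integral_abs_symmetrized_adjointKer_le (β : ℝ) :
    ∫ x, |symmetrized (adjointKer ψ t X Φ) β x| ≤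
      3 * π * (K ^ 2 * (64 + 5 * Λ)) * (ε ^ 2 / (|β| + ε) ^ 3) := by
  refine (integral_mono (integrable_symmetrized_adjointKer hψ hX hΦ hε hΛ hεt htε β).abs
    ((integrable_poissonKer_triple hε β).const_mul _)
    (abs_symmetrized_adjointKer_le hψ hX hΦ hε hΛ hεt htε β)).trans_eq ?_
  rw [integral_const_mul, integral_poissonKer_triple hε]
  ring

lemma integrable_uncurry_symmetrized_adjointKer :
    Integrable (Function.uncurry (symmetrized (adjointKer ψ t X Φ))) := by
  have ht : 0 < t := hε.trans_le hεt
  have hmeas := (measurable_symmetrized (measurable_adjointKer (t := t) hψ hX.measurable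
    hΦ.differentiable.continuous.measurable)).aestronglyMeasurable (μ := volume.prod volume)
  refine (integrable_prod_iff hmeas).2
    ⟨.of_forall (integrable_symmetrized_adjointKer hψ hX hΦ hε hΛ hεt htε), ?_⟩
  have hdom : Integrable ((Icc (-(2 * t)) (2 * t)).indicator
      fun _ => 3 * π * (K ^ 2 * (64 + 5 * Λ)) * (ε ^ 2 / ε ^ 3)) :=
    (integrable_indicator_iff measurableSet_Icc).2 (integrableOn_const (by simp))
  refine hdom.mono' hmeas.norm.integral_prod_right' (.of_forall fun β => ?_)
  rw [norm_of_nonneg (integral_nonneg fun _ => norm_nonneg _)]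
  by_cases hβ : β ∈ Icc (-(2 * t)) (2 * t)
  · rw [indicator_of_mem hβ]
    refine (integral_abs_symmetrized_adjointKer_le hψ hX hΦ hε hΛ hεt htε β).trans ?_
    gcongr
    exact le_add_of_nonneg_left (abs_nonneg β)
  · rw [indicator_of_notMem hβ]
    have hβ' : 2 * t < |β| := by rwa [mem_Icc, ← _root_.abs_le, not_le] at hβ
    simp [symmetrized_adjointKer_eq_zero hψ hΦ ht (.inl hβ')]

end

lemma integrable_adjointKer_left (hψ : IsCutoff ψ) (hX : IsThinWidth ε r K X)
    (hΦ : IsPoissonBump ε t Λ Φ) (hε : 0 < ε) (htr : t ≤ r) (x : ℝ) :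
    Integrable fun a => adjointKer ψ t X Φ a x :=
  ((integrable_poissonKer hε).const_mul _).mono'
    ((measurable_adjointKer hψ hX.measurable hΦ.differentiable.continuous.measurable).comp
      measurable_prodMk_right).aestronglyMeasurable
    (.of_forall fun a => abs_adjointKer_le hψ hX hΦ hε htr a x)

lemma integrableOn_adjointKer_add (hψ : IsCutoff ψ) (hX : IsThinWidth ε r K X)
    (hΦ : IsPoissonBump ε t Λ Φ) (hε : 0 < ε) (htr : t ≤ r) (β : ℝ) {ρ : ℝ} (hρ : 0 < ρ) :
    IntegrableOn (fun x => adjointKer ψ t X Φ (β + x) x) {x | ρ < |x|} := by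
  have hmeas := (measurable_adjointKer (t := t) hψ hX.measurable
    hΦ.differentiable.continuous.measurable).comp
      ((measurable_const_add β).prodMk measurable_id)
  have hset : MeasurableSet {x : ℝ | ρ < |x|} := measurableSet_lt measurable_const measurable_norm
  refine (((integrable_poissonKer hε).const_mul (ρ⁻¹ * (K ^ 2 * (ε * ε⁻¹)))).comp_add_left
    β).integrableOn.mono' hmeas.aestronglyMeasurable ?_
  filter_upwards [ae_restrict_mem hset] with x (hx : ρ < |x|)
  refine (abs_adjointKer_le hψ hX hΦ hε htr (β + x) x).trans ?_
  have hP := poissonKer_nonneg hε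
  gcongr
  · exact hP _
  · exact mul_nonneg (sq_nonneg K) (mul_nonneg hε.le (hP x))
  · exact poissonKer_le_inv hε x

theorem isMolecule_pvI_adjointKer (hψ : IsCutoff ψ) (hX : IsThinWidth ε (3 * t) K X)
    (hΦ : IsPoissonBump ε t Λ Φ) (hε : 0 < ε) (hΛ : 0 ≤ Λ) (hεt : ε ≤ t) (htε : 9 * t ^ 2 ≤ ε)
    {s : ℝ} (hts : 2 * t < s) :
    IsMolecule ε s (3 * π / 2 * (K ^ 2 * (64 + 5 * Λ)))
      fun β => pvI (fun α => adjointKer ψ t X Φ α (α - β)) β := by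
  have ht : 0 < t := hε.trans_le hεt
  have hpv : ∀ β, pvI (fun α => adjointKer ψ t X Φ α (α - β)) β =
      1 / 2 * ∫ x, symmetrized (adjointKer ψ t X Φ) β x := fun β =>
    pvI_eq_half_integral_symmetrized (adjointKer_neg hψ)
      (fun _ => integrableOn_adjointKer_add hψ hX hΦ hε (by linarith) β)
      (integrable_symmetrized_adjointKer hψ hX hΦ hε hΛ hεt htε β)
  have hint := integrable_uncurry_symmetrized_adjointKer hψ hX hΦ hε hΛ hεt htε
  simp only [hpv]
  refine ⟨hint.integral_prod_left.const_mul _, ?_, fun β => ?_, fun β hβ => ?_⟩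
  · rw [integral_const_mul, integral_integral_symmetrized_eq_zero hint
      (integrable_adjointKer_left hψ hX hΦ hε (by linarith)), mul_zero]
  · rw [abs_mul, abs_of_pos one_half_pos]
    have := abs_integral_le_integral_abs.trans
      (integral_abs_symmetrized_adjointKer_le hψ hX hΦ hε hΛ hεt htε β)
    linarith
  · simp [symmetrized_adjointKer_eq_zero hψ hΦ ht (.inl (hts.trans_le hβ))]

end AdjointKernel

section Molecules

variable {ε b c C Λ : ℝ} {τ G : ℝ → ℝ}

lemma exists_dyadic_weight_le (hε : 0 < ε) (x : ℝ) :
    ∃ k : ℕ, |x| < 2 ^ k * ε ∧ ε ^ 2 / (|x| + ε) ^ 3 ≤ 8 / ε * (1 / 8) ^ k := by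
  have hex : ∃ k : ℕ, |x| < 2 ^ k * ε := by
    obtain ⟨k, hk⟩ := pow_unbounded_of_one_lt (|x| / ε) one_lt_two
    exact ⟨k, (div_lt_iff₀ hε).1 hk⟩
  classical
  refine ⟨Nat.find hex, Nat.find_spec hex, ?_⟩
  rcases hk : Nat.find hex with _ | k
  · calc ε ^ 2 / (|x| + ε) ^ 3 ≤ ε ^ 2 / ε ^ 3 := by
          gcongr; exact le_add_of_nonneg_left (abs_nonneg x)
      _ = 1 / ε := by field_simp
      _ ≤ 8 / ε * (1 / 8) ^ 0 := by rw [pow_zero, mul_one]; gcongr; norm_num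
  · have hxk : 2 ^ k * ε ≤ |x| := not_lt.1 (Nat.find_min hex (by rw [hk]; exact k.lt_succ_self))
    calc ε ^ 2 / (|x| + ε) ^ 3 ≤ ε ^ 2 / (2 ^ k * ε) ^ 3 := by gcongr; linarith
      _ = 8 / ε * (1 / 8) ^ (k + 1) := by
          rw [mul_pow, ← pow_mul, mul_comm k 3, pow_mul, pow_succ, one_div, inv_pow]
          field_simp
          norm_num [pow_succ]

lemma tsum_dyadic_weight_mul (hε : 0 < ε) (hΛ : 0 ≤ Λ) :
    ∑' k : ℕ, ENNReal.ofReal (8 / ε * (1 / 8) ^ k) * ENNReal.ofReal (Λ * (2 ^ k * ε) ^ 2) =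
      ENNReal.ofReal (16 * Λ * ε) := by
  have hterm : ∀ k : ℕ, ENNReal.ofReal (8 / ε * (1 / 8) ^ k) *
      ENNReal.ofReal (Λ * (2 ^ k * ε) ^ 2) = ENNReal.ofReal (8 * Λ * ε * (1 / 2) ^ k) := by
    intro k
    have hpow : (1 / 8 : ℝ) ^ k * (2 ^ k) ^ 2 = (1 / 2) ^ k := by
      rw [← pow_mul, mul_comm k 2, pow_mul, ← mul_pow]
      norm_num
    rw [← ENNReal.ofReal_mul (by positivity), ← hpow]
    congr 1
    field_simp
  simp_rw [hterm]
  rw [← ENNReal.ofReal_tsum_of_nonneg (fun k => by positivity)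
    (summable_geometric_two.mul_left _), tsum_mul_left, tsum_geometric_two]
  congr 1
  ring

lemma lintegral_mul_weight_le {F : ℝ → ENNReal} (hε : 0 < ε) (hΛ : 0 ≤ Λ)
    (hF : ∀ R, ε ≤ R → ∫⁻ x in Ioo (-R) R, F x ≤ ENNReal.ofReal (Λ * R ^ 2)) :
    ∫⁻ x, F x * ENNReal.ofReal (ε ^ 2 / (|x| + ε) ^ 3) ≤ ENNReal.ofReal (16 * Λ * ε) := by
  set w : ℝ → ℝ := fun x => ε ^ 2 / (|x| + ε) ^ 3
  have hw : Measurable w := by fun_prop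
  set S : ℕ → Set ℝ := fun k => {x | |x| < 2 ^ k * ε ∧ w x ≤ 8 / ε * (1 / 8) ^ k}
  have hS : ∀ k, MeasurableSet (S k) := fun k =>
    (measurableSet_lt measurable_norm measurable_const).inter
      (measurableSet_le hw measurable_const)
  have hcover : ⋃ k, S k = univ :=
    iUnion_eq_univ_iff.2 fun x => exists_dyadic_weight_le hε x
  have hlayer : ∀ k, ∫⁻ x in S k, F x * ENNReal.ofReal (w x) ≤
      ENNReal.ofReal (8 / ε * (1 / 8) ^ k) * ENNReal.ofReal (Λ * (2 ^ k * ε) ^ 2) := fun k => by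
    calc ∫⁻ x in S k, F x * ENNReal.ofReal (w x)
        ≤ ∫⁻ x in S k, ENNReal.ofReal (8 / ε * (1 / 8) ^ k) * F x :=
          setLIntegral_mono' (hS k) fun x hx => by
            rw [mul_comm]
            exact mul_le_mul_left (ENNReal.ofReal_le_ofReal hx.2) _
      _ = ENNReal.ofReal (8 / ε * (1 / 8) ^ k) * ∫⁻ x in S k, F x :=
          lintegral_const_mul' _ _ ENNReal.ofReal_ne_top
      _ ≤ _ := mul_le_mul_right ((lintegral_mono_set fun x hx => abs_lt.1 hx.1).trans
          (hF _ (le_mul_of_one_le_left hε.le (one_le_pow₀ one_le_two)))) _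
  calc ∫⁻ x, F x * ENNReal.ofReal (w x) = ∫⁻ x in ⋃ k, S k, F x * ENNReal.ofReal (w x) := by
        rw [hcover, setLIntegral_univ]
    _ ≤ ∑' k, ∫⁻ x in S k, F x * ENNReal.ofReal (w x) := lintegral_iUnion_le _ _
    _ ≤ ∑' k : ℕ, ENNReal.ofReal (8 / ε * (1 / 8) ^ k) * ENNReal.ofReal (Λ * (2 ^ k * ε) ^ 2) :=
        ENNReal.tsum_le_tsum hlayer
    _ = ENNReal.ofReal (16 * Λ * ε) := tsum_dyadic_weight_mul hε hΛ

lemma IsMolecule.lintegral_enorm_mul_le (hG : IsMolecule ε b C G) (hε : 0 < ε) (hεb : ε ≤ b)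
    (hC : 0 ≤ C) (hΛ : 0 ≤ Λ)
    (hτ : ∀ R ∈ Icc ε b, ∫⁻ x in Ioo (-R) R, ‖τ x‖ₑ ≤ ENNReal.ofReal (Λ * R ^ 2)) :
    ∫⁻ x, ‖τ x * G x‖ₑ ≤ ENNReal.ofReal (16 * C * Λ * ε) := by
  set F : ℝ → ENNReal := (Ioo (-b) b).indicator fun x => ‖τ x‖ₑ with hF
  have hFle : ∀ R, ε ≤ R → ∫⁻ x in Ioo (-R) R, F x ≤ ENNReal.ofReal (Λ * R ^ 2) := fun R hR => by
    rw [hF, setLIntegral_indicator measurableSet_Ioo, Ioo_inter_Ioo, max_neg_neg]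
    refine (hτ (min b R) ⟨le_min hεb hR, min_le_left b R⟩).trans ?_
    have : 0 ≤ min b R := hε.le.trans (le_min hεb hR)
    gcongr
    exact min_le_right b R
  have hpoint : ∀ x, ‖τ x * G x‖ₑ ≤
      ENNReal.ofReal C * (F x * ENNReal.ofReal (ε ^ 2 / (|x| + ε) ^ 3)) := fun x => by
    by_cases hx : |x| < b
    · have hmem : x ∈ Ioo (-b) b := abs_lt.1 hx
      rw [hF, indicator_of_mem hmem, mul_left_comm, ← ENNReal.ofReal_mul hC, enorm_mul,
        ← ofReal_norm (G x)]
      exact mul_le_mul_right (ENNReal.ofReal_le_ofReal (hG.abs_le x)) _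
    · simp [hG.eq_zero x (not_lt.1 hx)]
  calc ∫⁻ x, ‖τ x * G x‖ₑ
      ≤ ENNReal.ofReal C * ∫⁻ x, F x * ENNReal.ofReal (ε ^ 2 / (|x| + ε) ^ 3) :=
        (lintegral_mono hpoint).trans_eq (lintegral_const_mul' _ _ ENNReal.ofReal_ne_top)
    _ ≤ ENNReal.ofReal C * ENNReal.ofReal (16 * Λ * ε) :=
        mul_le_mul_right (lintegral_mul_weight_le hε hΛ hFle) _
    _ = ENNReal.ofReal (16 * C * Λ * ε) := by
        rw [← ENNReal.ofReal_mul hC]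
        congr 1
        ring

-- The mean of `G` vanishes, so that only the oscillation of `τ` matters.
theorem IsMolecule.abs_integral_mul_le (hG : IsMolecule ε b C G) (hε : 0 < ε) (hεb : ε ≤ b)
    (hC : 0 ≤ C) (hΛ : 0 ≤ Λ)
    (hτ : ∀ R ∈ Icc ε b, ∫⁻ x in Ioo (-R) R, ‖τ x - c‖ₑ ≤ ENNReal.ofReal (Λ * R ^ 2)) :
    |∫ x, τ x * G x| ≤ 16 * C * Λ * ε := by
  have hnonneg : 0 ≤ 16 * C * Λ * ε := by positivity
  by_cases hint : Integrable fun x => τ x * G x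
  · have hshift : ∫ x, (τ x - c) * G x = ∫ x, τ x * G x := by
      simp only [sub_mul]
      rw [integral_sub hint (hG.integrable.const_mul c), integral_const_mul, hG.integral_eq_zero,
        mul_zero, sub_zero]
    rw [← hshift, ← ENNReal.ofReal_le_ofReal_iff hnonneg, ← norm_eq_abs, ofReal_norm]
    exact (enorm_integral_le_lintegral_enorm _).trans (hG.lintegral_enorm_mul_le hε hεb hC hΛ hτ)
  · rwa [integral_undef hint, abs_zero]

end Molecules

section Application

variable {ψ f g f' g' h φ : ℝ → ℝ} {δ A ε r s t M : ℝ} {L : NNReal}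

lemma IsFlatC11.of_contDiffOn (h5 : ContDiffOn ℝ 5 f (Ioo (-δ) δ)) (hδ : 0 < δ) (h0 : f 0 = 0)
    (h1 : derivWithin f (Ioo (-δ) δ) 0 = 0)
    (h2 : ∀ x ∈ Ioo (-δ) δ, |iteratedDerivWithin 2 f (Ioo (-δ) δ) x| ≤ A) :
    IsFlatC11 δ A f := by
  have hderiv : EqOn (derivWithin f (Ioo (-δ) δ)) (deriv f) (Ioo (-δ) δ) := fun x hx =>
    derivWithin_of_isOpen isOpen_Ioo hx
  have hC1 : ContDiffOn ℝ 1 (derivWithin f (Ioo (-δ) δ)) (Ioo (-δ) δ) :=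
    h5.derivWithin isOpen_Ioo.uniqueDiffOn (by norm_num)
  refine ⟨fun x hx => ?_, fun x y hx hy => ?_, h0, ?_⟩
  · exact (h5.differentiableOn (by norm_num) x (abs_lt.1 hx)).differentiableAt
      (Ioo_mem_nhds (abs_lt.1 hx).1 (abs_lt.1 hx).2)
  · rw [← hderiv (abs_lt.1 hx), ← hderiv (abs_lt.1 hy)]
    refine (convex_Ioo (-δ) δ).norm_image_sub_le_of_norm_derivWithin_le
      (hC1.differentiableOn (by norm_num)) (fun z hz => ?_) (abs_lt.1 hy) (abs_lt.1 hx)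
    simpa only [iteratedDerivWithin_succ, iteratedDerivWithin_one, iteratedDerivWithin_zero,
      norm_eq_abs] using h2 z hz
  · rwa [← hderiv ⟨neg_lt_zero.2 hδ, hδ⟩]

namespace GoodFG

lemma isFlatC11_left (hfg : GoodFG δ A ε f g) (hδ : 0 < δ) : IsFlatC11 δ A f := by
  obtain ⟨hf, -, hf0, -, hf1, -, hbound, -⟩ := hfg
  exact .of_contDiffOn hf hδ hf0 hf1 fun x hx =>
    (le_add_of_nonneg_right (abs_nonneg _)).trans (hbound x hx 2 (by norm_num))

lemma isFlatC11_right (hfg : GoodFG δ A ε f g) (hδ : 0 < δ) : IsFlatC11 δ A g := by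
  obtain ⟨-, hg, -, hg0, -, hg1, hbound, -⟩ := hfg
  exact .of_contDiffOn hg hδ hg0 hg1 fun x hx =>
    (le_add_of_nonneg_left (abs_nonneg _)).trans (hbound x hx 2 (by norm_num))

end GoodFG

lemma IsFlatC11.abs_le_mul_sq (hf : IsFlatC11 δ A f) {x : ℝ} (hx : |x| < δ) :
    |f x| ≤ A * x ^ 2 := by
  have h0 : |(0 : ℝ)| ≤ |x| := by simp
  have hle := hf.abs_sub_le hx le_rfl h0
  rwa [hf.apply_zero, sub_zero, sub_zero, mul_assoc, abs_mul_abs_self, ← sq] at hle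

lemma isThinWidth_Xt (hf : IsFlatC11 δ A f) (hg : IsFlatC11 δ A g) (hfm : Measurable f)
    (hgm : Measurable g) (hδ : 0 < δ) (hrδ : r < δ) (hr : r ^ 2 ≤ ε)
    (hlow : ∀ a, |a| ≤ r → -ε ≤ f a + g a) : IsThinWidth ε r (2 + 2 * A) (Xt ε f g) where
  measurable := (hfm.const_add (2 * ε)).add hgm
  le_apply a ha := by
    simp only [Xt]
    linarith [hlow a ha]
  apply_le a ha := by
    have hA := hf.nonneg hδ
    have hsq : a ^ 2 ≤ ε := (sq_abs a ▸ pow_le_pow_left₀ (abs_nonneg a) ha 2).trans hr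
    have hfa := (le_abs_self _).trans (hf.abs_le_mul_sq (ha.trans_lt hrδ))
    have hga := (le_abs_self _).trans (hg.abs_le_mul_sq (ha.trans_lt hrδ))
    have := mul_le_mul_of_nonneg_left hsq hA
    simp only [Xt]
    linarith
  abs_sub_le m hm a b ha hb := by
    have hm0 : 0 ≤ m := (abs_nonneg a).trans ha
    have hfab := hf.abs_sub_le (hm.trans_lt hrδ) ha hb
    have hgab := hg.abs_sub_le (hm.trans_lt hrδ) ha hb
    have hsplit : Xt ε f g a - Xt ε f g b = (f a - f b) + (g a - g b) := by
      simp only [Xt]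
      ring
    rw [hsplit]
    have := (abs_add_le _ _).trans (add_le_add hfab hgab)
    have : 0 ≤ 2 * m * |a - b| := by positivity
    linarith

namespace IsCutoff

lemma differentiable_scut (hψ : IsCutoff ψ) (t : ℝ) : Differentiable ℝ (scut ψ t) :=
  (hψ.1.differentiable (by norm_num)).comp (differentiable_id.div_const t)

end IsCutoff

lemma abs_deriv_scut_le (hL : LipschitzWith L ψ) (ht : 0 < t) (a : ℝ) :
    |deriv (scut ψ t) a| ≤ L / t := by
  rw [← norm_eq_abs]
  refine norm_deriv_le_of_lip' (f := scut ψ t) (by positivity) (.of_forall fun x => ?_)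
  simpa only [div_mul_eq_mul_div, norm_eq_abs] using abs_scut_sub_le hL ht x a

namespace InC2

lemma abs_le_poissonKer (hφ : InC2 δ ε φ) (hε : 0 < ε) (a : ℝ) : |φ a| ≤ poissonKer ε a := by
  obtain ⟨-, -, hsupp, hbound⟩ := hφ
  by_cases ha : a ∈ Ioo (-δ) δ
  · simpa only [poissonKer, sq_abs, add_comm] using (hbound a ha).1
  · rw [image_eq_zero_of_notMem_tsupport fun h => ha (hsupp h), abs_zero]
    exact poissonKer_nonneg hε a

lemma abs_deriv_le (hφ : InC2 δ ε φ) (hε : 0 < ε) {a : ℝ} (ha : |a| < δ) :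
    |deriv φ a| ≤ 4 * ε / (|a| + ε) ^ 3 := by
  refine (hφ.2.2.2 a (abs_lt.1 ha)).2.trans ?_
  rw [div_le_div_iff₀ (by positivity) (by positivity)]
  have hcube := add_pow_le (abs_nonneg a) hε.le 3
  norm_num at hcube
  nlinarith [mul_le_mul_of_nonneg_left hcube hε.le]

lemma isPoissonBump (hφ : InC2 δ ε φ) (hψ : IsCutoff ψ) (hL : LipschitzWith L ψ) (hε : 0 < ε)
    (hεt : ε ≤ t) (htδ : t < δ) :
    IsPoissonBump ε t (4 + 4 * L) fun a => scut ψ t a * φ a where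
  differentiable := (hψ.differentiable_scut t).mul (hφ.1.differentiable (by norm_num))
  abs_le a := by
    rw [abs_mul]
    exact (mul_le_of_le_one_left (abs_nonneg _) (hψ.abs_scut_le_one t a)).trans
      (hφ.abs_le_poissonKer hε a)
  eq_zero a ha := by rw [hψ.scut_eq_zero (hε.trans_le hεt) ha, zero_mul]
  abs_deriv_le a := by
    have ht : 0 < t := hε.trans_le hεt
    rcases lt_or_ge t |a| with ha | ha
    · have hzero : (fun a => scut ψ t a * φ a) =ᶠ[𝓝 a] fun _ => 0 := by
        filter_upwards [continuous_abs.continuousAt.eventually (lt_mem_nhds ha)] with b hb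
        rw [hψ.scut_eq_zero ht hb, zero_mul]
      rw [hzero.deriv_eq, deriv_const, abs_zero]
      positivity
    rw [deriv_fun_mul (hψ.differentiable_scut t a) (hφ.1.differentiable (by norm_num) a)]
    have hcut : |deriv (scut ψ t) a| ≤ L * (2 / (|a| + ε)) := by
      refine (abs_deriv_scut_le hL ht a).trans ?_
      rw [div_eq_mul_inv]
      gcongr
      rw [inv_eq_one_div, div_le_div_iff₀ ht (by positivity)]
      linarith
    have hφa := (hφ.abs_le_poissonKer hε a).trans (poissonKer_le_two_mul_div_sq hε a)
    calc |deriv (scut ψ t) a * φ a + scut ψ t a * deriv φ a|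
        ≤ |deriv (scut ψ t) a| * |φ a| + |scut ψ t a| * |deriv φ a| := by
          rw [← abs_mul, ← abs_mul]; exact abs_add_le _ _
      _ ≤ L * (2 / (|a| + ε)) * (2 * ε / (|a| + ε) ^ 2) + 1 * (4 * ε / (|a| + ε) ^ 3) := by
          gcongr
          · exact hψ.abs_scut_le_one t a
          · exact hφ.abs_deriv_le hε (ha.trans_lt htδ)
      _ = (4 + 4 * L) * ε / (|a| + ε) ^ 3 := by
          have : 0 < |a| + ε := by positivity
          field_simp
          ring

end InC2

lemma Hker_mul_eq_adjointKer (hψ : IsCutoff ψ) (ht : 0 < √ε / 2 ^ 6)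
    (hX : ∀ a, |a| ≤ √ε / 2 ^ 6 → Xt ε f g a = Xt ε f' g' a) (α β : ℝ) :
    Hker ψ ε f g α β * φ α = adjointKer ψ (√ε / 2 ^ 6) (Xt ε f' g')
      (fun a => scut ψ (√ε / 2 ^ 6) a * φ a) α (α - β) := by
  rcases lt_or_ge (√ε / 2 ^ 6) |α| with hα | hα
  · simp only [Hker, adjointKer, hψ.scut_eq_zero ht hα, mul_zero, zero_mul]
  · simp only [Hker, adjointKer, hX α hα]
    ring

lemma log_dyadic_ratio_le (hε : 0 < ε) (hs : 2 * s + ε ≤ 1) (hs0 : 0 < s) {R : ℝ} (hR : ε ≤ R) :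
    log ((2 * s + R) / R) ≤ log (1 / ε) := by
  have hRpos : 0 < R := hε.trans_le hR
  refine log_le_log (by positivity) ?_
  rw [div_le_div_iff₀ hRpos hε]
  nlinarith

lemma one_le_log_one_div (hε : 0 < ε) (hε4 : ε ≤ 1 / 4) : 1 ≤ log (1 / ε) := by
  rw [le_log_iff_exp_le (by positivity), le_div_iff₀ hε]
  nlinarith [exp_one_lt_d9]

lemma IsFlatC11.setLIntegral_enorm_pvI_t1Integrand_sub_le_log (hf : IsFlatC11 δ A f)
    (hfm : Measurable f) (hψ : IsCutoff ψ) (hL : LipschitzWith L ψ) (hε : 0 < ε)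
    (hε4 : √ε ≤ 1 / 4) (hεδ : 2 * √ε < δ) (hhm : Measurable h) (hh : ∀ x, |h x| ≤ M) {R : ℝ}
    (hR : R ∈ Icc ε (√ε / 8)) :
    ∫⁻ α in Ioo (-R) R,
        ‖pvI (t1Integrand ψ (√ε) f h α) α - ∫ β, t1Integrand ψ (√ε) f h 0 β‖ₑ ≤
      ENNReal.ofReal ((1 + 2 * π ^ 2 + 2 * π + 4 * (6 + 3 * L)) * A * M * log (1 / ε) * R ^ 2) := by
  have hs : 0 < √ε := sqrt_pos.2 hε
  have hsq : √ε ^ 2 = ε := sq_sqrt hε.le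
  have hA : 0 ≤ A := hf.nonneg (by linarith)
  have hM : 0 ≤ M := (abs_nonneg _).trans (hh 0)
  have hlog1 : 1 ≤ log (1 / ε) := one_le_log_one_div hε (by nlinarith)
  have hlogR : log ((2 * √ε + R) / R) ≤ log (1 / ε) :=
    log_dyadic_ratio_le hε (by nlinarith) hs hR.1
  refine (hf.setLIntegral_enorm_pvI_t1Integrand_sub_le hfm hψ hL hs hεδ (hε.trans_le hR.1) hR.2
    hhm hh).trans (ENNReal.ofReal_le_ofReal ?_)
  have hconst : 1 + 2 * π ^ 2 + 2 * π + 4 * (6 + 3 * L) * log ((2 * √ε + R) / R) ≤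
      (1 + 2 * π ^ 2 + 2 * π + 4 * (6 + 3 * L)) * log (1 / ε) := by
    rw [add_mul]
    gcongr
    exact le_mul_of_one_le_right (by positivity) hlog1
  calc (1 + 2 * π ^ 2 + 2 * π + 4 * (6 + 3 * L) * log ((2 * √ε + R) / R)) * A * M * R ^ 2
      ≤ (1 + 2 * π ^ 2 + 2 * π + 4 * (6 + 3 * L)) * log (1 / ε) * A * M * R ^ 2 := by gcongr
    _ = _ := by ring

lemma isMolecule_pvI_Hker (hψ : IsCutoff ψ) (hL : LipschitzWith L ψ) (hf : IsFlatC11 δ A f)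
    (hg : IsFlatC11 δ A g) (hε : 0 < ε) (hε64 : √ε ≤ 1 / 64) (hεδ : √ε < δ)
    (hlow : ∀ a ∈ Ioo (-√ε) (√ε), -ε ≤ f a + g a) (hφ : InC2 δ ε φ) :
    IsMolecule ε (√ε / 8) (3 * π / 2 * ((2 + 2 * A) ^ 2 * (64 + 5 * (4 + 4 * L))))
      fun β => pvI (fun α => Hker ψ ε f g α β * φ α) β := by
  have hs : 0 < √ε := sqrt_pos.2 hε
  have hsq : √ε ^ 2 = ε := sq_sqrt hε.le
  have hδ : 0 < δ := hs.trans hεδ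
  have hlt : ∀ a, |a| ≤ 3 * (√ε / 2 ^ 6) → a ∈ Ioo (-√ε) (√ε) := fun a ha =>
    abs_lt.1 (ha.trans_lt (by linarith))
  have hmem : ∀ a ∈ Ioo (-√ε) (√ε), a ∈ Ioo (-δ) δ := fun a ha =>
    Ioo_subset_Ioo (neg_le_neg hεδ.le) hεδ.le ha
  set F := (Ioo (-δ) δ).indicator f
  set G := (Ioo (-δ) δ).indicator g
  have hFf : EqOn F f (Ioo (-δ) δ) := eqOn_indicator
  have hGg : EqOn G g (Ioo (-δ) δ) := eqOn_indicator
  have hX : IsThinWidth ε (3 * (√ε / 2 ^ 6)) (2 + 2 * A) (Xt ε F G) :=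
    isThinWidth_Xt (hf.congr hδ hFf) (hg.congr hδ hGg) hf.measurable_indicator
      hg.measurable_indicator hδ (by linarith) (by nlinarith) fun a ha => by
        rw [hFf (hmem a (hlt a ha)), hGg (hmem a (hlt a ha))]
        exact hlow a (hlt a ha)
  have hXt : ∀ a, |a| ≤ √ε / 2 ^ 6 → Xt ε f g a = Xt ε F G a := fun a ha => by
    have ha' := hmem a (hlt a (by linarith))
    simp only [Xt, hFf ha', hGg ha']
  simp only [Hker_mul_eq_adjointKer hψ (by positivity) hXt]
  exact isMolecule_pvI_adjointKer hψ hX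
    (hφ.isPoissonBump hψ hL hε (by nlinarith) (by linarith)) hε (by positivity) (by nlinarith)
    (by nlinarith) (by linarith)

lemma IsFlatC11.abs_integral_pvI_t1Integrand_mul_le (hf : IsFlatC11 δ A f) (hψ : IsCutoff ψ)
    (hL : LipschitzWith L ψ) (hε : 0 < ε) (hε64 : √ε ≤ 1 / 64) (hεδ : 2 * √ε < δ)
    (hhm : Measurable h) (hh : ∀ x ∈ Ioo (-(2 * √ε)) (2 * √ε), |h x| ≤ M) {C : ℝ} (hC : 0 ≤ C)
    {G : ℝ → ℝ} (hG : IsMolecule ε (√ε / 8) C G) :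
    |∫ α, pvI (t1Integrand ψ (√ε) f h α) α * G α| ≤
      16 * C * ((1 + 2 * π ^ 2 + 2 * π + 4 * (6 + 3 * L)) * A * M * log (1 / ε)) * ε := by
  have hs : 0 < √ε := sqrt_pos.2 hε
  have hsq : √ε ^ 2 = ε := sq_sqrt hε.le
  have hδ : 0 < δ := by linarith
  have hA : 0 ≤ A := hf.nonneg hδ
  have hM : 0 ≤ M := (abs_nonneg _).trans (hh 0 ⟨by linarith, by linarith⟩)
  have hlog : 0 ≤ log (1 / ε) := zero_le_one.trans (one_le_log_one_div hε (by nlinarith))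
  set F := (Ioo (-δ) δ).indicator f
  set H := (Ioo (-(2 * √ε)) (2 * √ε)).indicator h with hH
  have hFf : EqOn F f (Ioo (-δ) δ) := eqOn_indicator
  have hHh : EqOn h H (Ioo (-(2 * √ε)) (2 * √ε)) := eqOn_indicator.symm
  have hHM : ∀ x, |H x| ≤ M := fun x => by
    by_cases hx : x ∈ Ioo (-(2 * √ε)) (2 * √ε)
    · exact hHh hx ▸ hh x hx
    · rwa [hH, indicator_of_notMem hx, abs_zero]
  have hlocal : ∀ α, pvI (t1Integrand ψ (√ε) f h α) α * G α =
      pvI (t1Integrand ψ (√ε) F H α) α * G α := fun α => by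
    rcases lt_or_ge |α| (√ε / 8) with hα | hα
    · rw [t1Integrand_congr hψ hs (by linarith)
        (hFf.symm.mono (Ioo_subset_Ioo (by linarith) hεδ.le)) hHh]
    · rw [hG.eq_zero α hα, mul_zero, mul_zero]
  simp only [hlocal]
  exact hG.abs_integral_mul_le hε (by nlinarith) hC (by positivity) fun R hR =>
    (hf.congr hδ hFf).setLIntegral_enorm_pvI_t1Integrand_sub_le_log hf.measurable_indicator hψ hL
      hε (by linarith) hεδ (hhm.indicator measurableSet_Ioo) hHM hR

end Application

theorem T1_Znorm_bound_general (A : ℝ) {ψ : ℝ → ℝ} (hψ : IsCutoff ψ) :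
    ∃ C : ℝ, 0 < C ∧ ∀ δ ε : ℝ, 0 < ε → √ε ≤ 1 / 64 → 2 * √ε < δ →
      ∀ f g : ℝ → ℝ, IsFlatC11 δ A f → IsFlatC11 δ A g →
        (∀ α ∈ Ioo (-√ε) (√ε), -ε ≤ f α + g α) →
        ∀ h : ℝ → ℝ, Measurable h →
          ∀ M : ℝ, (∀ x ∈ Ioo (-(2 * √ε)) (2 * √ε), |h x| ≤ M) →
            ∀ φ : ℝ → ℝ, InC2 δ ε φ →
              |∫ α : ℝ, T1 ψ ε f h α * Hstar ψ ε f g φ α| ≤ C * ε * log (1 / ε) * M := by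
  obtain ⟨L, hL⟩ := hψ.exists_lipschitzWith
  set C₁ : ℝ := 3 * π / 2 * ((2 + 2 * A) ^ 2 * (64 + 5 * (4 + 4 * L)))
  set C₂ : ℝ := (1 + 2 * π ^ 2 + 2 * π + 4 * (6 + 3 * L)) * A
  have hC₁ : 0 ≤ C₁ := by positivity
  refine ⟨|((2 * π)⁻¹ * (2 * π)⁻¹) * (16 * C₁ * C₂)| + 1, by positivity, ?_⟩
  intro δ ε hε hε64 hεδ f g hf hg hlow h hhm M hh φ hφ
  have hM : 0 ≤ M := (abs_nonneg _).trans (hh 0 ⟨by linarith [sqrt_pos.2 hε], by positivity⟩)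
  have hlog : 0 ≤ log (1 / ε) := zero_le_one.trans
    (one_le_log_one_div hε (by nlinarith [sq_sqrt hε.le, sqrt_nonneg ε]))
  have hmol := isMolecule_pvI_Hker hψ hL hf hg hε hε64 (by linarith [sqrt_pos.2 hε]) hlow hφ
  have hpair := hf.abs_integral_pvI_t1Integrand_mul_le hψ hL hε hε64 hεδ hhm hh hC₁ hmol
  have hfactor : ∀ α, T1 ψ ε f h α * Hstar ψ ε f g φ α = ((2 * π)⁻¹ * (2 * π)⁻¹) *
      (pvI (t1Integrand ψ (√ε) f h α) α * pvI (fun a => Hker ψ ε f g a α * φ a) α) :=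
    fun α => mul_mul_mul_comm _ _ _ _
  simp only [hfactor, integral_const_mul, abs_mul _ (∫ _, _)]
  calc |(2 * π)⁻¹ * (2 * π)⁻¹| *
        |∫ α, pvI (t1Integrand ψ (√ε) f h α) α * pvI (fun a => Hker ψ ε f g a α * φ a) α|
      ≤ ((2 * π)⁻¹ * (2 * π)⁻¹) * (16 * C₁ * (C₂ * M * log (1 / ε)) * ε) := by
        rw [abs_of_nonneg (by positivity)]
        gcongr
    _ = ((2 * π)⁻¹ * (2 * π)⁻¹) * (16 * C₁ * C₂) * (ε * log (1 / ε) * M) := by ring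
    _ ≤ (|((2 * π)⁻¹ * (2 * π)⁻¹) * (16 * C₁ * C₂)| + 1) * (ε * log (1 / ε) * M) := by
        gcongr
        exact (le_abs_self _).trans (le_add_of_nonneg_right zero_le_one)
    _ = _ := by ring

/-- **Z-norm bound for `T_{1,f}` (Lemma 3.3(i), estimate (3.20)).**  For every `h ∈ L∞(I_δ)`,
`‖T_{1,f}h‖_Z ≲ ε log(1/ε) ‖h‖_{L∞(I_{2√ε})}`, i.e. for every `φ ∈ C₂`,
`|∫ T_{1,f}h · H*φ| ≤ C ε log(1/ε) M` whenever `|h| ≤ M` on `I_{2√ε}`, with `C` depending only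
on `A`, `δ` (and `ψ`). -/
theorem T1_Znorm_bound (δ A : ℝ) (hδ : δ ∈ Ioc (0:ℝ) (1/100)) (hA : 1 ≤ A)
    (ψ : ℝ → ℝ) (hψ : IsCutoff ψ) :
    ∃ C : ℝ, 0 < C ∧
      ∀ ε : ℝ, ε ∈ Ioc (0:ℝ) (δ ^ 2 / 100) →
      ∀ f g : ℝ → ℝ, GoodFG δ A ε f g →
      ∀ h : ℝ → ℝ, Measurable h → (∃ M' : ℝ, ∀ x ∈ Ioo (-δ) δ, |h x| ≤ M') →
        ∀ M : ℝ, (∀ x ∈ Ioo (-(2 * Real.sqrt ε)) (2 * Real.sqrt ε), |h x| ≤ M) →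
          ∀ φ : ℝ → ℝ, InC2 δ ε φ →
            |∫ α : ℝ, T1 ψ ε f h α * Hstar ψ ε f g φ α| ≤ C * ε * Real.log (1 / ε) * M := by
  obtain ⟨C, hC, hbound⟩ := T1_Znorm_bound_general A hψ
  refine ⟨C, hC, fun ε hε f g hfg h hhm _ M hh φ hφ => ?_⟩
  have hsqrt : √ε ≤ δ / 10 := sqrt_le_iff.2 ⟨by linarith [hδ.1], by linarith [hε.2]⟩
  have hwiden : Ioo (-√ε) (√ε) ⊆ Ioo (-(4 * √ε)) (4 * √ε) :=
    Ioo_subset_Ioo (by linarith [sqrt_nonneg ε]) (by linarith [sqrt_nonneg ε])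
  exact hbound δ ε hε.1 (by linarith [hδ.2]) (by linarith [hδ.1]) f g (hfg.isFlatC11_left hδ.1)
    (hfg.isFlatC11_right hδ.1)
    (fun α hα => hfg.2.2.2.2.2.2.2 α (hwiden hα) α (hwiden hα)) h hhm M hh φ hφ
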